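/- Let 1 ≤ p_0 ≤ q_0 ≤ ∞ and assume sup_{j≥0} 2^{jd/q_0} ‖𝒜_j‖_{L^{p_0}→L^{q_0}(L^{p_0})} ≤ C < ∞. Let q_0 ≤ q ≤ ∞ and define ρ_min(q) and ρ_max(q) by 1 − 1/ρ_min(q) = (q_0/q)(1 − 1/p_0) and 1/ρ_max(q) = (q_0/q)(1/p_0). If ρ_min(q) ≤ p ≤ q and 0 < r ≤ min{p, ρ_max(q)}, then sup_{j≥0} 2^{jd/q} ‖𝒜_j‖_{L^p→L^q(L^r)} < ∞. -/

import Mathlib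

open MeasureTheory Metric Set
open scoped ENNReal NNReal FourierTransform

noncomputable section

/-- Euclidean `d`-space. -/
abbrev Euc (d : ℕ) : Type := EuclideanSpace ℝ (Fin d)

/-- The normalized surface measure `σ` on the unit sphere `S^{d-1} ⊆ ℝ^d`. -/
def sphereMeasure (d : ℕ) : Measure (Euc d) :=
  (((volume : Measure (Euc d)).toSphere Set.univ)⁻¹ : ℝ≥0∞) •
    ((volume : Measure (Euc d)).toSphere.map Subtype.val)

/-- The spherical average `A_t f(x) = ∫_{S^{d-1}} f(x - t y) dσ(y)`. -/
def sphAvg {d : ℕ} (f : Euc d → ℂ) (t : ℝ) (x : Euc d) : ℂ :=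
  ∫ y, f (x - t • y) ∂(sphereMeasure d)

/-- The dyadic symbols `β_j` built from the bump `β₀`:
`β_j(s) = β₀(2^{-j} s) - β₀(2^{1-j} s)` for `j ≥ 1`. -/
def betaJ (β₀ : ℝ → ℝ) : ℕ → ℝ → ℝ
  | 0 => β₀
  | (j + 1) => fun s => β₀ ((2 : ℝ) ^ (-(j + 1 : ℤ)) * s) - β₀ ((2 : ℝ) ^ (-(j : ℤ)) * s)

/-- The frequency localization `L_j` with symbol `β_j(|ξ|)`. -/
def freqLoc (d : ℕ) (β₀ : ℝ → ℝ) (j : ℕ) (f : Euc d → ℂ) : Euc d → ℂ :=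
  𝓕⁻ (fun ξ => (betaJ β₀ j ‖ξ‖ : ℂ) * 𝓕 f ξ)

/-- `χ` is an admissible time cutoff: smooth, `χ = 1` on a neighborhood of `[1,2]`,
supported in `[1/2,4]`. -/
def IsCutoff (χ : ℝ → ℝ) : Prop :=
  ContDiff ℝ (⊤ : ℕ∞) χ ∧ (∃ U : Set ℝ, IsOpen U ∧ Set.Icc 1 2 ⊆ U ∧ Set.EqOn χ 1 U) ∧
    Function.support χ ⊆ Set.Icc (1 / 2 : ℝ) 4

/-- `β₀` is an admissible frequency bump: smooth, `β₀(s) = 1` for `|s| < 1/2` and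
`β₀(s) = 0` for `|s| > 1`. -/
def IsBump (β₀ : ℝ → ℝ) : Prop :=
  ContDiff ℝ (⊤ : ℕ∞) β₀ ∧ (∀ s : ℝ, |s| < 1 / 2 → β₀ s = 1) ∧ ∀ s : ℝ, 1 < |s| → β₀ s = 0

/-- The frequency-localized operator `𝒜_j f(x,t) = χ(t) A_t L_j f(x)`. -/
def Aj (d : ℕ) (χ β₀ : ℝ → ℝ) (j : ℕ) (f : Euc d → ℂ) (x : Euc d) (t : ℝ) : ℂ :=
  (χ t : ℂ) * sphAvg (freqLoc d β₀ j f) t x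

/-- `L^q` norm (with respect to `μ`) of an `ℝ≥0∞`-valued function, `1 ≤ q ≤ ∞`. -/
def lqNorm {α : Type*} [MeasurableSpace α] (q : ℝ≥0∞) (g : α → ℝ≥0∞)
    (μ : Measure α) : ℝ≥0∞ :=
  if q = ∞ then essSup g μ else (∫⁻ x, g x ^ q.toReal ∂μ) ^ (1 / q.toReal)

/-- The mixed norm `‖F‖_{L^q(L^r)}` of `F : ℝ^d × ℝ → ℂ`. -/
def mixedNorm (d : ℕ) (q r : ℝ≥0∞) (F : Euc d → ℝ → ℂ) : ℝ≥0∞ :=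
  lqNorm q (fun x => lqNorm r (fun t => (‖F x t‖₊ : ℝ≥0∞)) volume) volume

/-- The operator norm `‖𝒜_j‖_{L^p → L^q(L^r)}`. -/
def AjOpNorm (d : ℕ) (χ β₀ : ℝ → ℝ) (j : ℕ) (p q r : ℝ≥0∞) : ℝ≥0∞ :=
  ⨆ (f : Euc d → ℂ) (_ : eLpNorm f p volume ≤ 1), mixedNorm d q r (Aj d χ β₀ j f)




lemma entire_param {Ω : Type*} [MeasurableSpace Ω] (m : Measure Ω) (w : Ω → ℂ) (hw : Integrable w m)
    (L : Ω → ℝ) (hL : Measurable L) (Λ : ℝ) (hΛ : ∀ ω, |L ω| ≤ Λ) :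
    Differentiable ℂ (fun z : ℂ => ∫ ω, w ω * Complex.exp (z * L ω) ∂m) := by
  intro z0
  have hLc : Measurable (fun ω => (L ω : ℂ)) := Complex.measurable_ofReal.comp hL
  have hΛ0 : ∀ ω : Ω, 0 ≤ Λ := fun ω => (abs_nonneg _).trans (hΛ ω)
  have hmeas : ∀ z : ℂ, AEStronglyMeasurable (fun ω => w ω * Complex.exp (z * L ω)) m := by
    intro z
    exact hw.1.mul (by fun_prop)
  have hb : ∀ ω, ∀ z : ℂ, ‖z‖ ≤ ‖z0‖ + 1 → ‖Complex.exp (z * L ω)‖ ≤ Real.exp ((‖z0‖ + 1) * Λ) := by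
    intro ω z hz
    rw [Complex.norm_exp]
    apply Real.exp_le_exp.2
    calc (z * L ω).re ≤ ‖z * L ω‖ := Complex.re_le_norm _
      _ = ‖z‖ * |L ω| := by rw [norm_mul, Complex.norm_real, Real.norm_eq_abs]
      _ ≤ _ := by
        have := hΛ ω
        gcongr
  have key := hasDerivAt_integral_of_dominated_loc_of_deriv_le (μ := m)
    (F := fun z ω => w ω * Complex.exp (z * L ω)) (x₀ := z0)
    (F' := fun z ω => w ω * (Complex.exp (z * L ω) * L ω))
    (bound := fun ω => ‖w ω‖ * (Real.exp ((‖z0‖ + 1) * Λ) * Λ))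
    (s := Metric.ball z0 1) (Metric.ball_mem_nhds _ one_pos) (Filter.Eventually.of_forall hmeas)
    ?_ ?_ ?_ ?_ ?_
  · exact key.2.differentiableAt
  · refine (hw.norm.mul_const (Real.exp ((‖z0‖ + 1) * Λ))).mono' (hmeas _) ?_
    refine Filter.Eventually.of_forall fun ω => ?_
    rw [norm_mul]
    gcongr
    exact hb ω z0 (by linarith)
  · exact hw.1.mul (by fun_prop)
  · refine Filter.Eventually.of_forall fun ω z hz => ?_
    have hz' : ‖z‖ ≤ ‖z0‖ + 1 := by
      have h1 : ‖z - z0‖ < 1 := by simpa [dist_eq_norm] using hz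
      have h2 : ‖z‖ ≤ ‖z0‖ + ‖z - z0‖ := by
        have := norm_add_le z0 (z - z0)
        simpa using this
      linarith
    rw [norm_mul, norm_mul, Complex.norm_real, Real.norm_eq_abs]
    have := hb ω z hz'
    have := hΛ ω
    gcongr
  · exact hw.norm.mul_const _
  · refine Filter.Eventually.of_forall fun ω z hz => ?_
    have : HasDerivAt (fun z : ℂ => z * (L ω : ℂ)) (L ω : ℂ) z := by
      simpa using (hasDerivAt_id z).mul_const (L ω : ℂ)
    exact (this.cexp).const_mul _

lemma threelines_param {Ω : Type*} [MeasurableSpace Ω] (m : Measure Ω) (w : Ω → ℂ)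
    (hw : Integrable w m)
    (L : Ω → ℝ) (hL : Measurable L) (Λ : ℝ) (hΛ : ∀ ω, |L ω| ≤ Λ) (a b : ℝ)
    (Φ : ℂ → ℂ) (hΦ : ∀ z, Φ z = ∫ ω, w ω * Complex.exp (z * L ω) ∂m)
    (ha : ∀ z : ℂ, z.re = 0 → ‖Φ z‖ ≤ a) (hb : ∀ z : ℂ, z.re = 1 → ‖Φ z‖ ≤ b)
    (θ : ℝ) (h0 : 0 ≤ θ) (h1 : θ ≤ 1) : ‖Φ θ‖ ≤ a ^ (1 - θ) * b ^ θ := by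
  have hd : Differentiable ℂ Φ := by
    rw [funext hΦ]; exact entire_param m w hw L hL Λ hΛ
  have := Complex.HadamardThreeLines.norm_le_interp_of_mem_verticalClosedStrip' (f := Φ) (z := (θ:ℂ))
    (a := a) (b := b) (l := 0) (u := 1) one_pos (by simp [Complex.HadamardThreeLines.verticalClosedStrip, h0, h1]) hd.diffContOnCl
    ?_ (fun z hz => ha z (by simpa using hz)) (fun z hz => hb z (by simpa using hz))
  · simpa using this
  · refine ⟨∫ ω, ‖w ω‖ * Real.exp Λ ∂m, ?_⟩
    rintro _ ⟨z, hz, rfl⟩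
    simp only [Complex.HadamardThreeLines.verticalClosedStrip, mem_preimage, mem_Icc] at hz
    simp only [Function.comp, hΦ]
    refine norm_integral_le_of_norm_le (hw.norm.mul_const _) (Filter.Eventually.of_forall fun ω => ?_)
    rw [norm_mul, Complex.norm_exp]
    gcongr
    have : (z * L ω).re = z.re * L ω := by simp
    rw [this]
    calc z.re * L ω ≤ |z.re * L ω| := le_abs_self _
      _ = |z.re| * |L ω| := abs_mul _ _
      _ ≤ 1 * Λ := by
        have := hΛ ω
        have h2 : |z.re| ≤ 1 := by rw [abs_of_nonneg hz.1]; exact hz.2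
        gcongr
      _ = Λ := one_mul _



lemma enorm_cexp_log (r : ℝ) (hr : 0 < r) (s : ℂ) :
    ‖Complex.exp (s * (Real.log r : ℂ))‖ₑ = ENNReal.ofReal r ^ s.re := by
  rw [← ofReal_norm, Complex.norm_exp, ENNReal.ofReal_rpow_of_pos hr,
    Real.rpow_def_of_pos hr]
  congr 2
  simp [mul_comm]

lemma enorm_phase (z : ℂ) (hz : z ≠ 0) : ‖z / (‖z‖ : ℂ)‖ₑ = 1 := by
  rw [← ofReal_norm, norm_div, Complex.norm_real, norm_norm, div_self (by simpa using hz)]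
  simp

lemma abs_log_le_of (c r : ℝ) (hc : 1 ≤ c) (h1 : c⁻¹ ≤ r) (h2 : r ≤ c) : |Real.log r| ≤ Real.log c := by
  have hc0 : 0 < c := by linarith
  have hr : 0 < r := lt_of_lt_of_le (by positivity) h1
  rw [abs_le]
  constructor
  · rw [← Real.log_inv]; exact Real.log_le_log (by positivity) h1
  · exact Real.log_le_log hr h2

/-- phase times complex power -/
def phz (s : ℂ) (z : ℂ) : ℂ := z / (‖z‖ : ℂ) * Complex.exp (s * (Real.log ‖z‖ : ℂ))

lemma phz_zero (s : ℂ) : phz s 0 = 0 := by simp [phz]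

lemma enorm_phz (s z : ℂ) (hz : z ≠ 0) : ‖phz s z‖ₑ = ‖z‖ₑ ^ s.re := by
  rw [phz, enorm_mul, enorm_phase z hz, one_mul, enorm_cexp_log _ (by simpa using hz), ofReal_norm]

lemma phz_one (z : ℂ) : phz 1 z = z := by
  by_cases hz : z = 0
  · simp [hz, phz_zero]
  · have : (‖z‖ : ℂ) ≠ 0 := by simpa using hz
    rw [phz, one_mul, ← Complex.ofReal_exp, Real.exp_log (by simpa using hz)]
    field_simp

lemma measurable_phz (s : ℂ) : Measurable (phz s) := by
  unfold phz
  fun_prop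

lemma ofReal_rpow_rpow_aux (N : ℝ) (hN : 0 < N) (a b : ℝ) :
    ENNReal.ofReal N ^ a * ENNReal.ofReal N ^ b = ENNReal.ofReal N ^ (a + b) := by
  rw [ENNReal.rpow_add _ _ (by simpa using hN) (by simp)]

/-- bound on the line `re z = 0` -/
lemma line0 {X τ : Type*} [MeasurableSpace X] [MeasurableSpace τ] (μ : Measure X) (ν : Measure τ)
    [SigmaFinite μ] [SFinite ν]
    (H F : X × τ → ℝ≥0∞) (hH : Measurable H) (hF : Measurable F) (N : X → ℝ) (hN : Measurable N)
    (p0 q0 p q : ℝ) (hp0 : 1 ≤ p0) (hq0 : p0 ≤ q0) (hp : 0 < p) (hq : 0 < q)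
    (hN0 : ∀ x, 0 ≤ N x)
    (hNF : ∀ x, N x = 0 → ∀ t, F (x, t) = 0)
    (S : Set (X × τ)) (hS : MeasurableSet S) (hSN : ∀ x t, (x, t) ∈ S → N x ≠ 0)
    (hSF : ∀ ω, ω ∉ S → F ω = 0)
    (hNp : ∀ x, ∫⁻ t, F (x, t) ^ p ∂ν = ENNReal.ofReal (N x) ^ p) (M0 : ℝ≥0)
    (h0 : ∫⁻ x, (∫⁻ t, H (x, t) ^ p0 ∂ν) ^ (q0 / p0) ∂μ ≤ (M0 : ℝ≥0∞) ^ q0)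
    (g : X × τ → ℝ≥0∞) (hg : ∀ x t, (x, t) ∉ S → g (x, t) = 0)
    (hg' : ∀ x t, (x, t) ∈ S → g (x, t) = F (x, t) ^ (p * (1 - 1 / p0)) *
      ENNReal.ofReal (N x) ^ (q * (1 - 1 / q0) - p * (1 - 1 / p0))) :
    ∫⁻ ω, H ω * g ω ∂(μ.prod ν) ≤
      (∫⁻ x, ENNReal.ofReal (N x) ^ q ∂μ) ^ (1 - 1 / q0) * M0 := by
  have hp0' : 0 < p0 := by linarith
  have hq0' : 0 < q0 := by linarith
  have hP : 0 ≤ 1 - 1 / p0 := by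
    rw [sub_nonneg, div_le_one hp0']; exact hp0
  have hQ : 0 ≤ 1 - 1 / q0 := by
    rw [sub_nonneg, div_le_one hq0']; linarith
  have hgm : Measurable g := by
    have : g = S.indicator (fun ω => F ω ^ (p * (1 - 1 / p0)) *
      ENNReal.ofReal (N ω.1) ^ (q * (1 - 1 / q0) - p * (1 - 1 / p0))) := by
      ext ⟨x, t⟩
      by_cases h : (x, t) ∈ S
      · rw [indicator_of_mem h, hg' x t h]
      · rw [indicator_of_notMem h, hg x t h]
    rw [this]
    apply Measurable.indicator _ hS
    fun_prop
  rw [lintegral_prod (fun ω => H ω * g ω) (by fun_prop)]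
  have hinner : ∀ x, ∫⁻ t, H (x, t) * g (x, t) ∂ν ≤
      (ENNReal.ofReal (N x) ^ q) ^ (1 - 1 / q0) * ((∫⁻ t, H (x, t) ^ p0 ∂ν) ^ (q0 / p0)) ^ (1 / q0) := by
    intro x
    by_cases hx : N x = 0
    · have : ∀ t, g (x, t) = 0 := fun t => hg x t (fun h => hSN x t h hx)
      simp [this]
    · have hx' : 0 < N x := lt_of_le_of_ne (hN0 x) (Ne.symm hx)
      set n := ENNReal.ofReal (N x) with hn
      have hn0 : n ≠ 0 := by simpa [hn] using hx'
      have hnt : n ≠ ∞ := by simp [hn]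
      calc ∫⁻ t, H (x, t) * g (x, t) ∂ν
          ≤ ∫⁻ t, n ^ (q * (1 - 1 / q0) - p * (1 - 1 / p0)) *
            ((H (x, t) ^ p0) ^ (1 / p0) * (F (x, t) ^ p) ^ (1 - 1 / p0)) ∂ν := by
            apply lintegral_mono
            intro t
            by_cases h : (x, t) ∈ S
            · simp only
              rw [hg' x t h, ← ENNReal.rpow_mul, ← ENNReal.rpow_mul, mul_one_div_cancel hp0'.ne',
                ENNReal.rpow_one]
              apply le_of_eq; ring
            · simp only; rw [hg x t h]; simp
        _ = n ^ (q * (1 - 1 / q0) - p * (1 - 1 / p0)) *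
            ∫⁻ t, ((H (x, t) ^ p0) ^ (1 / p0) * (F (x, t) ^ p) ^ (1 - 1 / p0)) ∂ν := by
            rw [lintegral_const_mul]
            fun_prop
        _ ≤ n ^ (q * (1 - 1 / q0) - p * (1 - 1 / p0)) *
            ((∫⁻ t, H (x, t) ^ p0 ∂ν) ^ (1 / p0) * (∫⁻ t, F (x, t) ^ p ∂ν) ^ (1 - 1 / p0)) := by
            gcongr
            apply ENNReal.lintegral_mul_norm_pow_le
            · fun_prop
            · fun_prop
            · positivity
            · exact hP
            · ring
        _ = _ := by
            rw [hNp, ← ENNReal.rpow_mul, ← ENNReal.rpow_mul, ← ENNReal.rpow_mul]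
            have e1 : q0 / p0 * (1 / q0) = 1 / p0 := by field_simp
            rw [e1]
            have e2 : n ^ (q * (1 - 1 / q0)) = n ^ (q * (1 - 1 / q0) - p * (1 - 1 / p0)) * n ^ (p * (1 - 1 / p0)) := by
              rw [← ENNReal.rpow_add _ _ hn0 hnt]; congr 1; ring
            rw [e2]; ring
  calc _ ≤ ∫⁻ x, (ENNReal.ofReal (N x) ^ q) ^ (1 - 1 / q0) * ((∫⁻ t, H (x, t) ^ p0 ∂ν) ^ (q0 / p0)) ^ (1 / q0) ∂μ :=
        lintegral_mono hinner
    _ ≤ (∫⁻ x, ENNReal.ofReal (N x) ^ q ∂μ) ^ (1 - 1 / q0) * (∫⁻ x, (∫⁻ t, H (x, t) ^ p0 ∂ν) ^ (q0 / p0) ∂μ) ^ (1 / q0) := by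
        have hm : Measurable (fun x => ∫⁻ t, H (x, t) ^ p0 ∂ν) :=
          Measurable.lintegral_prod_right' (f := fun ω => H ω ^ p0) (by fun_prop)
        apply ENNReal.lintegral_mul_norm_pow_le
        · fun_prop
        · fun_prop
        · exact hQ
        · positivity
        · ring
    _ ≤ _ := by
        gcongr
        calc _ ≤ ((M0 : ℝ≥0∞) ^ q0) ^ (1 / q0) := by gcongr
          _ = M0 := by rw [← ENNReal.rpow_mul, mul_one_div_cancel hq0'.ne', ENNReal.rpow_one]

/-- bound on the line `re z = 1` -/
lemma line1 {X τ Y : Type*} [MeasurableSpace X] [MeasurableSpace τ] [MeasurableSpace Y]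
    (μ : Measure X) (ν : Measure τ) (η : Measure Y)
    [SigmaFinite μ] [SigmaFinite ν] [SigmaFinite η]
    (k : (X × τ) × Y → ℝ≥0∞) (hk : Measurable k) (M1 : ℝ≥0)
    (h1 : ∀ x y, ∫⁻ t, k ((x, t), y) ∂ν ≤ M1) (h2 : ∀ ω, ∫⁻ y, k (ω, y) ∂η ≤ M1)
    (F : X × τ → ℝ≥0∞) (hF : Measurable F) (N : X → ℝ) (hN : Measurable N)
    (p q u : ℝ) (hp : 0 < p) (hq : 0 < q) (hu0 : 0 ≤ u) (hu1 : u ≤ 1)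
    (hN0 : ∀ x, 0 ≤ N x)
    (hNF : ∀ x, N x = 0 → ∀ t, F (x, t) = 0)
    (hNp : ∀ x, ∫⁻ t, F (x, t) ^ p ∂ν = ENNReal.ofReal (N x) ^ p)
    (f : Y → ℝ≥0∞) (hf : Measurable f) (hf1 : ∫⁻ y, f y ^ p ∂η ≤ 1)
    (V : (X × τ) × Y → ℝ≥0∞)
    (hV : ∀ x t y, V ((x, t), y) = 0 ∨ (N x ≠ 0 ∧ V ((x, t), y) = k ((x, t), y) * (f y ^ (p * u) * (F (x, t) ^ (p * (1 - u)) *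
      ENNReal.ofReal (N x) ^ (q - p * (1 - u)))))) :
    ∫⁻ ω, V ω ∂((μ.prod ν).prod η) ≤ M1 * (∫⁻ x, ENNReal.ofReal (N x) ^ q ∂μ) := by
  set I := ∫⁻ x, ENNReal.ofReal (N x) ^ q ∂μ with hI
  let a : (X × τ) × Y → ℝ≥0∞ := fun ω => k ω * (f ω.2 ^ p * ENNReal.ofReal (N ω.1.1) ^ q)
  let b : (X × τ) × Y → ℝ≥0∞ := fun ω => k ω * (F ω.1 ^ p * ENNReal.ofReal (N ω.1.1) ^ (q - p))
  have ham : Measurable a := by fun_prop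
  have hbm : Measurable b := by fun_prop
  have hVab : ∀ ω, V ω ≤ a ω ^ u * b ω ^ (1 - u) := by
    rintro ⟨⟨x, t⟩, y⟩
    rcases hV x t y with h | ⟨hx, h⟩
    · rw [h]; exact zero_le
    · have hx' : 0 < N x := lt_of_le_of_ne (hN0 x) (Ne.symm hx)
      have hn0 : ENNReal.ofReal (N x) ≠ 0 := by simpa using hx'
      rw [h]
      simp only [a, b]
      rw [ENNReal.mul_rpow_of_nonneg _ _ hu0, ENNReal.mul_rpow_of_nonneg _ _ hu0,
        ENNReal.mul_rpow_of_nonneg _ _ (sub_nonneg.2 hu1), ENNReal.mul_rpow_of_nonneg _ _ (sub_nonneg.2 hu1)]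
      simp only [← ENNReal.rpow_mul]
      have e1 : k ((x, t), y) = k ((x, t), y) ^ u * k ((x, t), y) ^ (1 - u) := by
        rw [← ENNReal.rpow_add_of_nonneg _ _ hu0 (sub_nonneg.2 hu1)]; simp
      have e2 : ENNReal.ofReal (N x) ^ (q - p * (1 - u)) =
          ENNReal.ofReal (N x) ^ (q * u) * ENNReal.ofReal (N x) ^ ((q - p) * (1 - u)) := by
        rw [← ENNReal.rpow_add _ _ hn0 (by simp)]; congr 1; ring
      rw [e2]
      nth_rw 1 [e1]
      apply le_of_eq; ring
  have ha : ∫⁻ ω, a ω ∂((μ.prod ν).prod η) ≤ M1 * I := by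
    rw [lintegral_prod_symm _ ham.aemeasurable]
    have : ∀ y, ∫⁻ ω, a (ω, y) ∂(μ.prod ν) ≤ f y ^ p * (M1 * I) := by
      intro y
      rw [lintegral_prod _ (by fun_prop)]
      calc _ ≤ ∫⁻ x, f y ^ p * (M1 * ENNReal.ofReal (N x) ^ q) ∂μ := by
            apply lintegral_mono
            intro x
            simp only [a]
            rw [lintegral_mul_const _ (by fun_prop)]
            calc _ ≤ (M1 : ℝ≥0∞) * (f y ^ p * ENNReal.ofReal (N x) ^ q) := by gcongr; exact h1 x y
              _ = _ := by ring
        _ = _ := by rw [lintegral_const_mul _ (by fun_prop), lintegral_const_mul _ (by fun_prop)]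
    calc _ ≤ ∫⁻ y, f y ^ p * (M1 * I) ∂η := lintegral_mono this
      _ = (∫⁻ y, f y ^ p ∂η) * (M1 * I) := by rw [lintegral_mul_const _ (by fun_prop)]
      _ ≤ 1 * (M1 * I) := by gcongr
      _ = _ := one_mul _
  have hb : ∫⁻ ω, b ω ∂((μ.prod ν).prod η) ≤ M1 * I := by
    rw [lintegral_prod _ hbm.aemeasurable]
    calc _ ≤ ∫⁻ ω : X × τ, M1 * (F ω ^ p * ENNReal.ofReal (N ω.1) ^ (q - p)) ∂(μ.prod ν) := by
          apply lintegral_mono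
          intro ω
          simp only [b]
          rw [lintegral_mul_const _ (by fun_prop)]
          gcongr; exact h2 ω
      _ = M1 * ∫⁻ ω : X × τ, (F ω ^ p * ENNReal.ofReal (N ω.1) ^ (q - p)) ∂(μ.prod ν) := by
          rw [lintegral_const_mul _ (by fun_prop)]
      _ ≤ M1 * I := by
          gcongr
          rw [lintegral_prod _ (by fun_prop)]
          apply lintegral_mono
          intro x
          simp only
          rw [lintegral_mul_const _ (by fun_prop), hNp]
          by_cases hx : N x = 0
          · simp [hx, hp]
          · have hx' : 0 < N x := lt_of_le_of_ne (hN0 x) (Ne.symm hx)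
            rw [ofReal_rpow_rpow_aux _ hx']; apply le_of_eq; congr 1; ring
  calc _ ≤ ∫⁻ ω, a ω ^ u * b ω ^ (1 - u) ∂((μ.prod ν).prod η) := lintegral_mono hVab
    _ ≤ (∫⁻ ω, a ω ∂((μ.prod ν).prod η)) ^ u * (∫⁻ ω, b ω ∂((μ.prod ν).prod η)) ^ (1 - u) :=
        ENNReal.lintegral_mul_norm_pow_le ham.aemeasurable hbm.aemeasurable hu0 (sub_nonneg.2 hu1) (by ring)
    _ ≤ (M1 * I) ^ u * (M1 * I) ^ (1 - u) := by
        gcongr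
    _ = M1 * I := by
        rw [← ENNReal.rpow_add_of_nonneg _ _ hu0 (sub_nonneg.2 hu1)]; simp



lemma core0 {X τ Y : Type*} [MeasurableSpace X] [MeasurableSpace τ] [MeasurableSpace Y]
    (μ : Measure X) (ν : Measure τ) (η : Measure Y)
    [SigmaFinite μ] [IsFiniteMeasure ν] [SigmaFinite η]
    (k : (X × τ) × Y → ℂ) (hk : Measurable k) (B : ℝ) (hB : ∀ ω, ‖k ω‖ ≤ B) (M0 M1 : ℝ≥0)
    (h1 : ∀ x y, ∫⁻ t, ‖k ((x, t), y)‖ₑ ∂ν ≤ M1) (h2 : ∀ ω, ∫⁻ y, ‖k (ω, y)‖ₑ ∂η ≤ M1)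
    (p0 q0 p q lam u : ℝ) (hp0 : 1 ≤ p0) (hq0 : p0 ≤ q0) (hlam : 0 < lam) (hlam1 : lam ≤ 1)
    (hu0 : 0 ≤ u) (hu1 : u ≤ 1) (hp : 0 < p) (hpe : p * (lam / p0 + (1 - lam) * u) = 1)
    (hqe : q * lam = q0)
    (h0 : ∀ f : Y → ℂ, Measurable f → Integrable f η → ∫⁻ y, ‖f y‖ₑ ^ p0 ∂η ≤ 1 →
      ∫⁻ x, (∫⁻ t, ‖∫ y, k ((x, t), y) * f y ∂η‖ₑ ^ p0 ∂ν) ^ (q0 / p0) ∂μ ≤ (M0 : ℝ≥0∞) ^ q0)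
    (f : Y → ℂ) (hfm : Measurable f) (hfi : Integrable f η) (hf1 : ∫⁻ y, ‖f y‖ₑ ^ p ∂η ≤ 1)
    (c : ℝ) (hc : 1 ≤ c) (hfc : ∀ y, f y ≠ 0 → c⁻¹ ≤ ‖f y‖ ∧ ‖f y‖ ≤ c)
    (F : X × τ → ℂ) (hF : ∀ ω, F ω = ∫ y, k (ω, y) * f y ∂η) (hFm : Measurable F)
    (S : Set (X × τ)) (hS : MeasurableSet S) (A : Set X) (hA : MeasurableSet A) (hAf : μ A < ∞)
    (N : X → ℝ) (hN : Measurable N) (hNA : ∀ x, N x = 0 ∨ (x ∈ A ∧ c⁻¹ ≤ N x ∧ N x ≤ c))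
    (hSF : ∀ x t, (x, t) ∈ S → c⁻¹ ≤ ‖F (x, t)‖ ∧ ‖F (x, t)‖ ≤ c ∧ N x ≠ 0)
    (hNp : ∀ x, ∫⁻ t, (S.indicator (fun ω => ‖F ω‖ₑ) (x, t)) ^ p ∂ν = ENNReal.ofReal (N x) ^ p) :
    ∫⁻ x, ENNReal.ofReal (N x) ^ q ∂μ ≤ ((M0 : ℝ≥0∞) ^ lam * (M1 : ℝ≥0∞) ^ (1 - lam)) ^ q := by
  have hc0 : 0 < c := by linarith
  have hci : 0 < c⁻¹ := by positivity
  have hp0' : 0 < p0 := by linarith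
  have hq0' : 0 < q0 := by linarith
  have hq : 0 < q := by
    by_contra h
    push Not at h
    nlinarith
  have hN0 : ∀ x, 0 ≤ N x := by
    intro x
    rcases hNA x with h | h
    · exact h.ge
    · linarith [h.2.1]
  have hNc : ∀ x, N x ≤ c := by
    intro x
    rcases hNA x with h | h
    · rw [h]; exact hc0.le
    · exact h.2.2
  set I := ∫⁻ x, ENNReal.ofReal (N x) ^ q ∂μ with hI
  have hIf : I < ∞ := by
    calc I ≤ ∫⁻ x, A.indicator (fun _ => ENNReal.ofReal c ^ q) x ∂μ := by
          apply lintegral_mono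
          intro x
          rcases hNA x with h | h
          · simp [h, hq]
          · simp only; rw [indicator_of_mem h.1]; gcongr; exact h.2.2
      _ = ENNReal.ofReal c ^ q * μ A := by rw [lintegral_indicator_const hA]
      _ < ∞ := ENNReal.mul_lt_top (ENNReal.rpow_lt_top_of_nonneg hq.le (by simp)) hAf
  -- exponents
  let al : ℂ → ℂ := fun z => ((p * (1 / p0) : ℝ) : ℂ) + z * ((p * (u - 1 / p0) : ℝ) : ℂ)
  let aa : ℂ → ℂ := fun z => ((p * (1 - 1 / p0) : ℝ) : ℂ) - z * ((p * (u - 1 / p0) : ℝ) : ℂ)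
  let bb : ℂ → ℂ := fun z => ((q * (1 - 1 / q0) : ℝ) : ℂ) + z * ((q * (1 / q0) : ℝ) : ℂ) - aa z
  let fz : ℂ → Y → ℂ := fun z y => phz (al z) (f y)
  let gz : ℂ → X × τ → ℂ := fun z => S.indicator (fun ω =>
    phz (aa z) ((starRingEnd ℂ) (F ω)) * Complex.exp (bb z * (Real.log (N ω.1) : ℂ)))
  -- decomposition
  let Lf : Y → ℝ := fun y => ({y | f y ≠ 0} : Set Y).indicator (fun y => Real.log ‖f y‖) y
  let LF : X × τ → ℝ := S.indicator (fun ω => Real.log ‖F ω‖)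
  let LN : X × τ → ℝ := S.indicator (fun ω => Real.log (N ω.1))
  have hfs : MeasurableSet {y | f y ≠ 0} := (hfm (measurableSet_singleton 0)).compl
  have hLf : Measurable Lf := Measurable.indicator (by fun_prop) hfs
  have hLF : Measurable LF := Measurable.indicator (by fun_prop) hS
  have hLN : Measurable LN := Measurable.indicator (by fun_prop) hS
  have hlc : 0 ≤ Real.log c := Real.log_nonneg hc
  have bLf : ∀ y, |Lf y| ≤ Real.log c := by
    intro y
    by_cases h : f y ≠ 0
    · have : Lf y = Real.log ‖f y‖ := indicator_of_mem (s := {y | f y ≠ 0}) h _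
      rw [this]; exact abs_log_le_of c _ hc (hfc y h).1 (hfc y h).2
    · have : Lf y = 0 := indicator_of_notMem (s := {y | f y ≠ 0}) h _
      rw [this]; simpa using hlc
  have bLF : ∀ ω, |LF ω| ≤ Real.log c := by
    rintro ⟨x, t⟩
    by_cases h : (x, t) ∈ S
    · simp only [LF]; rw [indicator_of_mem h]
      exact abs_log_le_of c _ hc (hSF x t h).1 (hSF x t h).2.1
    · simp only [LF]; rw [indicator_of_notMem h]; simpa using hlc
  have bLN : ∀ ω, |LN ω| ≤ Real.log c := by
    rintro ⟨x, t⟩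
    by_cases h : (x, t) ∈ S
    · simp only [LN]; rw [indicator_of_mem h]
      have := (hNA x).resolve_left (hSF x t h).2.2
      exact abs_log_le_of c _ hc this.2.1 this.2.2
    · simp only [LN]; rw [indicator_of_notMem h]; simpa using hlc
  let L : (X × τ) × Y → ℝ := fun ω => (p * (u - 1 / p0)) * Lf ω.2 - (p * (u - 1 / p0)) * LF ω.1 +
    (q * (1 / q0) + p * (u - 1 / p0)) * LN ω.1
  have hLm : Measurable L := by fun_prop
  let Λ : ℝ := |p * (u - 1 / p0)| * Real.log c + |p * (u - 1 / p0)| * Real.log c +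
    |q * (1 / q0) + p * (u - 1 / p0)| * Real.log c
  have hΛ : ∀ ω, |L ω| ≤ Λ := by
    intro ω
    calc |L ω| ≤ |(p * (u - 1 / p0)) * Lf ω.2| + |(p * (u - 1 / p0)) * LF ω.1| +
        |(q * (1 / q0) + p * (u - 1 / p0)) * LN ω.1| := by
          refine (abs_add_le _ _).trans ?_
          gcongr
          exact abs_sub _ _
      _ ≤ Λ := by
          simp only [abs_mul _ (Lf _), abs_mul _ (LF _), abs_mul _ (LN _), Λ]
          have := bLf ω.2
          have := bLF ω.1
          have := bLN ω.1
          gcongr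
  let W : ℂ → (X × τ) × Y → ℂ := fun z ω => k ω * fz z ω.2 * gz z ω.1
  have hW : ∀ z ω, W z ω = W 0 ω * Complex.exp (z * L ω) := by
    rintro z ⟨⟨x, t⟩, y⟩
    by_cases hS' : (x, t) ∈ S
    · by_cases hy : f y ≠ 0
      · have e1 : Lf y = Real.log ‖f y‖ := indicator_of_mem (s := {y | f y ≠ 0}) hy _
        have e2 : LF (x, t) = Real.log ‖F (x, t)‖ := indicator_of_mem hS' _
        have e3 : LN (x, t) = Real.log (N x) := indicator_of_mem hS' _
        have e4 : ∀ z, gz z (x, t) = phz (aa z) ((starRingEnd ℂ) (F (x, t))) *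
          Complex.exp (bb z * (Real.log (N x) : ℂ)) := fun z => indicator_of_mem hS' _
        simp only [W, fz, L]
        rw [e4, e4, e1, e2, e3]
        simp only [phz, RCLike.norm_conj]
        have : Complex.exp (al z * (Real.log ‖f y‖ : ℂ)) * Complex.exp (aa z * (Real.log ‖F (x, t)‖ : ℂ)) *
            Complex.exp (bb z * (Real.log (N x) : ℂ)) =
            Complex.exp (al 0 * (Real.log ‖f y‖ : ℂ)) * Complex.exp (aa 0 * (Real.log ‖F (x, t)‖ : ℂ)) *
            Complex.exp (bb 0 * (Real.log (N x) : ℂ)) * Complex.exp (z * ((p * (u - 1 / p0) * Real.log ‖f y‖ -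
              p * (u - 1 / p0) * Real.log ‖F (x, t)‖ + (q * (1 / q0) + p * (u - 1 / p0)) * Real.log (N x) : ℝ) : ℂ)) := by
          simp only [← Complex.exp_add]
          congr 1
          simp only [al, aa, bb]
          push_cast
          ring
        linear_combination (k ((x, t), y) * (f y / (‖f y‖ : ℂ)) * ((starRingEnd ℂ) (F (x, t)) / (‖F (x, t)‖ : ℂ))) * this
      · push Not at hy
        simp [W, fz, hy, phz_zero]
    · have : ∀ z, gz z (x, t) = 0 := fun z => indicator_of_notMem hS' _
      simp [W, this]
  have hfzm : ∀ z, Measurable (fz z) := fun z => (measurable_phz _).comp hfm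
  have hgzm : ∀ z, Measurable (gz z) := by
    intro z
    apply Measurable.indicator _ hS
    have := (measurable_phz (aa z)).comp (Complex.continuous_conj.measurable.comp hFm)
    have h' : Measurable (fun ω : X × τ => Complex.exp (bb z * (Real.log (N ω.1) : ℂ))) := by fun_prop
    exact this.mul h'
  have hfze : ∀ z y, f y ≠ 0 → ‖fz z y‖ₑ = ‖f y‖ₑ ^ (al z).re := fun z y h => enorm_phz _ _ h
  have hfz0 : ∀ z y, f y = 0 → fz z y = 0 := fun z y h => by simp only [fz]; rw [h, phz_zero]
  have hgz0 : ∀ z ω, ω ∉ S → gz z ω = 0 := fun z ω h => indicator_of_notMem h _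
  have hgze : ∀ z x t, (x, t) ∈ S → ‖gz z (x, t)‖ₑ = ‖F (x, t)‖ₑ ^ (aa z).re * ENNReal.ofReal (N x) ^ (bb z).re := by
    intro z x t h
    have e4 : gz z (x, t) = phz (aa z) ((starRingEnd ℂ) (F (x, t))) *
          Complex.exp (bb z * (Real.log (N x) : ℂ)) := indicator_of_mem h _
    have hF0 : F (x, t) ≠ 0 := by
      intro h'
      have := (hSF x t h).1
      rw [h'] at this
      simp at this
      linarith
    rw [e4, enorm_mul, enorm_phz _ _ (by simpa using hF0), enorm_cexp_log]
    · congr 2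
      rw [← ofReal_norm, ← ofReal_norm, RCLike.norm_conj]
    · exact lt_of_le_of_ne (hN0 x) (Ne.symm (hSF x t h).2.2)
  -- integrability of f_z
  have hfzi : ∀ z, Integrable (fz z) η := by
    intro z
    refine (hfi.norm.const_mul (c * Real.exp (|(al z).re| * Real.log c))).mono' (hfzm z).aestronglyMeasurable ?_
    refine Filter.Eventually.of_forall fun y => ?_
    by_cases hy : f y = 0
    · rw [hfz0 z y hy]; simp [hy]
    · simp only [fz, phz]
      have h3 := abs_log_le_of c _ hc (hfc y hy).1 (hfc y hy).2
      have h4 : ‖f y / (‖f y‖ : ℂ)‖ = 1 := by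
        rw [norm_div, Complex.norm_real, norm_norm, div_self (by simpa using hy)]
      rw [norm_mul, h4, one_mul, Complex.norm_exp]
      have h5 : (al z * (Real.log ‖f y‖ : ℂ)).re = (al z).re * Real.log ‖f y‖ := by simp
      rw [h5]
      have h6 : Real.exp ((al z).re * Real.log ‖f y‖) ≤ Real.exp (|(al z).re| * Real.log c) := by
        apply Real.exp_le_exp.2
        calc _ ≤ |(al z).re * Real.log ‖f y‖| := le_abs_self _
          _ = |(al z).re| * |Real.log ‖f y‖| := abs_mul _ _
          _ ≤ _ := by gcongr
      have h7 : 1 ≤ c * ‖f y‖ := by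
        have := (hfc y hy).1
        calc (1 : ℝ) = c * c⁻¹ := by field_simp
          _ ≤ _ := by gcongr
      calc _ ≤ Real.exp (|(al z).re| * Real.log c) * 1 := by rw [mul_one]; exact h6
        _ ≤ Real.exp (|(al z).re| * Real.log c) * (c * ‖f y‖) := by gcongr
        _ = _ := by ring
  have hgzi : ∀ z, Integrable (gz z) (μ.prod ν) := by
    intro z
    have hAi : Integrable ((A ×ˢ (univ : Set τ)).indicator (fun _ : X × τ =>
        Real.exp (|(aa z).re| * Real.log c + |(bb z).re| * Real.log c))) (μ.prod ν) := by
      rw [integrable_indicator_iff (hA.prod MeasurableSet.univ)]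
      apply integrableOn_const
      · rw [Measure.prod_prod]
        exact (ENNReal.mul_lt_top hAf (measure_lt_top _ _)).ne
      · simp
    refine hAi.mono' (hgzm z).aestronglyMeasurable (Filter.Eventually.of_forall ?_)
    rintro ⟨x, t⟩
    by_cases h : (x, t) ∈ S
    · have hx := (hNA x).resolve_left (hSF x t h).2.2
      rw [indicator_of_mem (by simpa using hx.1)]
      have e4 : gz z (x, t) = phz (aa z) ((starRingEnd ℂ) (F (x, t))) *
          Complex.exp (bb z * (Real.log (N x) : ℂ)) := indicator_of_mem h _
      have hF0 : F (x, t) ≠ 0 := by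
        intro h'
        have := (hSF x t h).1
        rw [h'] at this
        simp at this
        linarith
      rw [e4, phz, norm_mul, norm_mul, norm_div, Complex.norm_real, norm_norm,
        div_self (by simpa using hF0), one_mul, Complex.norm_exp, Complex.norm_exp, ← Real.exp_add]
      apply Real.exp_le_exp.2
      have h3 := abs_log_le_of c _ hc (hSF x t h).1 (hSF x t h).2.1
      have h4 := abs_log_le_of c _ hc hx.2.1 hx.2.2
      rw [RCLike.norm_conj, Complex.re_mul_ofReal, Complex.re_mul_ofReal]
      calc _ ≤ |(aa z).re * Real.log ‖F (x, t)‖| + |(bb z).re * Real.log (N x)| := by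
            gcongr <;> exact le_abs_self _
        _ ≤ _ := by rw [abs_mul, abs_mul]; gcongr
    · rw [hgz0 z _ h]
      simp only [norm_zero]
      apply indicator_nonneg
      intro _ _
      positivity
  have hWi : ∀ z, Integrable (W z) ((μ.prod ν).prod η) := by
    intro z
    have h := ((hgzi z).mul_prod (hfzi z)).bdd_mul (c := B) hk.aestronglyMeasurable (Filter.Eventually.of_forall hB)
    refine h.congr (Filter.Eventually.of_forall fun ω => ?_)
    simp only [W]; ring
  let Φ : ℂ → ℂ := fun z => ∫ ω, W z ω ∂((μ.prod ν).prod η)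
  have hΦ' : ∀ z, Φ z = ∫ ω, (∫ y, k (ω, y) * fz z y ∂η) * gz z ω ∂(μ.prod ν) := by
    intro z
    simp only [Φ]
    rw [integral_prod _ (hWi z)]
    congr 1
    ext ω
    simp only [W]
    rw [integral_mul_const]
  let Fi : X × τ → ℝ≥0∞ := S.indicator (fun ω => ‖F ω‖ₑ)
  have hFim : Measurable Fi := Measurable.indicator (by fun_prop) hS
  have hFi1 : ∀ ω, ω ∈ S → Fi ω = ‖F ω‖ₑ := fun ω h => indicator_of_mem h _
  have hFi0 : ∀ ω, ω ∉ S → Fi ω = 0 := fun ω h => indicator_of_notMem h _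
  have hNFi : ∀ x, N x = 0 → ∀ t, Fi (x, t) = 0 := fun x hx t => hFi0 _ (fun h => (hSF x t h).2.2 hx)
  have hQ : 0 ≤ 1 - 1 / q0 := by
    rw [sub_nonneg, div_le_one hq0']; linarith
  have hline0 : ∀ z : ℂ, z.re = 0 → ‖Φ z‖ₑ ≤ I ^ (1 - 1 / q0) * M0 := by
    intro z hz
    rw [hΦ']
    refine (enorm_integral_le_lintegral_enorm _).trans ?_
    simp only [enorm_mul]
    have hal : (al z).re = p * (1 / p0) := by
      simp only [al, Complex.add_re, Complex.re_mul_ofReal, Complex.ofReal_re, hz]; ring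
    have haa : (aa z).re = p * (1 - 1 / p0) := by
      simp only [aa, Complex.sub_re, Complex.re_mul_ofReal, Complex.ofReal_re, hz]; ring
    have hbb : (bb z).re = q * (1 - 1 / q0) - p * (1 - 1 / p0) := by
      rw [← haa]
      simp only [bb, Complex.sub_re, Complex.add_re, Complex.re_mul_ofReal, Complex.ofReal_re, hz]; ring
    have hHm : Measurable (fun ω => ‖∫ y, k (ω, y) * fz z y ∂η‖ₑ) := by
      apply Measurable.enorm
      apply StronglyMeasurable.measurable
      apply StronglyMeasurable.integral_prod_right' (f := fun ω : (X × τ) × Y => k ω * fz z ω.2)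
      exact (hk.mul ((hfzm z).comp measurable_snd)).stronglyMeasurable
    have hh := h0 (fz z) (hfzm z) (hfzi z) (by
      refine le_trans (lintegral_mono fun y => ?_) hf1
      by_cases hy : f y = 0
      · rw [hfz0 z y hy]; simp [hy, hp0', hp]
      · rw [hfze z y hy, hal, ← ENNReal.rpow_mul]
        apply le_of_eq; congr 1; field_simp)
    exact line0 μ ν (fun ω => ‖∫ y, k (ω, y) * fz z y ∂η‖ₑ) Fi hHm hFim N hN p0 q0 p q hp0 hq0 hp hq hN0
      hNFi S hS (fun x t h => (hSF x t h).2.2) hFi0 hNp M0 hh (fun ω => ‖gz z ω‖ₑ)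
      (fun x t h => by rw [hgz0 z _ h]; simp)
      (fun x t h => by rw [hgze z x t h, haa, hbb, hFi1 _ h])
  have hline1 : ∀ z : ℂ, z.re = 1 → ‖Φ z‖ₑ ≤ M1 * I := by
    intro z hz
    refine (enorm_integral_le_lintegral_enorm _).trans ?_
    have hal : (al z).re = p * u := by
      simp only [al, Complex.add_re, Complex.re_mul_ofReal, Complex.ofReal_re, hz]; ring
    have haa : (aa z).re = p * (1 - u) := by
      simp only [aa, Complex.sub_re, Complex.re_mul_ofReal, Complex.ofReal_re, hz]; ring
    have hbb : (bb z).re = q - p * (1 - u) := by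
      rw [← haa]
      simp only [bb, Complex.sub_re, Complex.add_re, Complex.re_mul_ofReal, Complex.ofReal_re, hz]; ring
    refine line1 μ ν η (fun ω => ‖k ω‖ₑ) hk.enorm M1 h1 h2 Fi hFim N hN p q u hp hq hu0 hu1 hN0 hNFi hNp
      (fun y => ‖f y‖ₑ) hfm.enorm hf1 (fun ω => ‖W z ω‖ₑ) ?_
    intro x t y
    by_cases hy : f y = 0
    · left; simp [W, hfz0 z y hy]
    by_cases hxt : (x, t) ∈ S
    · right
      refine ⟨(hSF x t hxt).2.2, ?_⟩
      simp only [W]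
      rw [enorm_mul, enorm_mul, hfze z y hy, hgze z x t hxt, hFi1 _ hxt, hal, haa, hbb, mul_assoc]
    · left; simp [W, hgz0 z _ hxt]
  have hθ : I ≤ ‖Φ ((1 - lam : ℝ) : ℂ)‖ₑ := by
    have hal : al ((1 - lam : ℝ) : ℂ) = 1 := by
      simp only [al]
      have : p * (1 / p0) + (1 - lam) * (p * (u - 1 / p0)) = 1 := by
        linear_combination hpe
      rw [← Complex.ofReal_mul, ← Complex.ofReal_add, this, Complex.ofReal_one]
    have haa : aa ((1 - lam : ℝ) : ℂ) = ((p - 1 : ℝ) : ℂ) := by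
      have : aa ((1 - lam : ℝ) : ℂ) = (p : ℂ) - al ((1 - lam : ℝ) : ℂ) := by
        simp only [aa, al]; push_cast; ring
      rw [this, hal]; push_cast; ring
    have hbb : bb ((1 - lam : ℝ) : ℂ) = ((q - p : ℝ) : ℂ) := by
      simp only [bb]
      rw [haa, ← Complex.ofReal_mul, ← Complex.ofReal_add, ← Complex.ofReal_sub]
      congr 1
      have : q * (1 / q0) * lam = 1 := by
        rw [← hqe]; field_simp
      linarith
    let R : X × τ → ℝ := S.indicator (fun ω => Real.exp (p * Real.log ‖F ω‖ + (q - p) * Real.log (N ω.1)))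
    have hRm : Measurable R := Measurable.indicator (by fun_prop) hS
    have hR0 : ∀ ω, 0 ≤ R ω := fun ω => indicator_nonneg (fun _ _ => by positivity) _
    have hR : Φ ((1 - lam : ℝ) : ℂ) = ((∫ ω, R ω ∂(μ.prod ν) : ℝ) : ℂ) := by
      rw [hΦ', ← integral_complex_ofReal]
      congr 1
      ext ⟨x, t⟩
      have : (∫ y, k ((x, t), y) * fz ((1 - lam : ℝ) : ℂ) y ∂η) = F (x, t) := by
        rw [hF]
        simp only [fz, hal, phz_one]
      rw [this]
      by_cases h : (x, t) ∈ S
      · have e4 : gz ((1 - lam : ℝ) : ℂ) (x, t) = phz (aa ((1 - lam : ℝ) : ℂ)) ((starRingEnd ℂ) (F (x, t))) *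
          Complex.exp (bb ((1 - lam : ℝ) : ℂ) * (Real.log (N x) : ℂ)) := indicator_of_mem h _
        have e5 : R (x, t) = Real.exp (p * Real.log ‖F (x, t)‖ + (q - p) * Real.log (N x)) := indicator_of_mem h _
        have hFp : 0 < ‖F (x, t)‖ := lt_of_lt_of_le hci (hSF x t h).1
        rw [e4, e5, haa, hbb, phz, RCLike.norm_conj]
        have e6 : F (x, t) * ((starRingEnd ℂ) (F (x, t)) / (‖F (x, t)‖ : ℂ)) = ((Real.exp (Real.log ‖F (x, t)‖) : ℝ) : ℂ) := by
          rw [Real.exp_log hFp, ← mul_div_assoc, Complex.mul_conj, Complex.normSq_eq_norm_sq]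
          have : (‖F (x, t)‖ : ℂ) ≠ 0 := by exact_mod_cast hFp.ne'
          push_cast
          field_simp
        rw [← mul_assoc, ← mul_assoc, e6, ← Complex.ofReal_mul, ← Complex.ofReal_mul, ← Complex.ofReal_exp, ← Complex.ofReal_exp,
          ← Complex.ofReal_mul, ← Complex.ofReal_mul, ← Real.exp_add, ← Real.exp_add]
        congr 2; ring
      · have e5 : R (x, t) = 0 := indicator_of_notMem h _
        rw [hgz0 _ _ h, e5]; simp
    have hRI : ∫⁻ ω, ENNReal.ofReal (R ω) ∂(μ.prod ν) = I := by
      rw [lintegral_prod _ (by fun_prop)]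
      apply lintegral_congr
      intro x
      by_cases hx : N x = 0
      · have : ∀ t, R (x, t) = 0 := fun t => indicator_of_notMem (fun h => (hSF x t h).2.2 hx) _
        simp [this, hx, hq]
      · have hx' : 0 < N x := lt_of_le_of_ne (hN0 x) (Ne.symm hx)
        have : ∀ t, ENNReal.ofReal (R (x, t)) = (S.indicator (fun ω => ‖F ω‖ₑ) (x, t)) ^ p * ENNReal.ofReal (N x) ^ (q - p) := by
          intro t
          by_cases h : (x, t) ∈ S
          · have e5 : R (x, t) = Real.exp (p * Real.log ‖F (x, t)‖ + (q - p) * Real.log (N x)) := indicator_of_mem h _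
            have hFp : 0 < ‖F (x, t)‖ := lt_of_lt_of_le hci (hSF x t h).1
            rw [e5, indicator_of_mem h, Real.exp_add, ENNReal.ofReal_mul (by positivity), ← ofReal_norm,
              ENNReal.ofReal_rpow_of_pos hFp, ENNReal.ofReal_rpow_of_pos hx', Real.rpow_def_of_pos hFp, Real.rpow_def_of_pos hx',
              mul_comm p, mul_comm (q - p)]
          · have e5 : R (x, t) = 0 := indicator_of_notMem h _
            rw [e5, indicator_of_notMem h]; simp [hp]
        simp_rw [this]
        rw [lintegral_mul_const _ (by
          have : Measurable (fun t => Fi (x, t) ^ p) := by fun_prop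
          exact this), hNp, ofReal_rpow_rpow_aux _ hx']
        congr 1; ring
    rw [hR, integral_eq_lintegral_of_nonneg_ae (Filter.Eventually.of_forall hR0) hRm.aestronglyMeasurable, hRI,
      ← ofReal_norm, Complex.norm_real, Real.norm_eq_abs, abs_of_nonneg ENNReal.toReal_nonneg, ENNReal.ofReal_toReal hIf.ne]
  have hI0f : I ^ (1 - 1 / q0) * M0 ≠ ∞ := ENNReal.mul_ne_top (ENNReal.rpow_lt_top_of_nonneg hQ hIf.ne).ne (by simp)
  have hI1f : M1 * I ≠ ∞ := ENNReal.mul_ne_top (by simp) hIf.ne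
  have h3 := threelines_param ((μ.prod ν).prod η) (W 0) (hWi 0) L hLm Λ hΛ (I ^ (1 - 1 / q0) * M0).toReal
    (M1 * I).toReal Φ (fun z => by simp only [Φ]; congr 1; ext ω; exact hW z ω)
    (fun z hz => by rw [← toReal_enorm]; exact ENNReal.toReal_mono hI0f (hline0 z hz))
    (fun z hz => by rw [← toReal_enorm]; exact ENNReal.toReal_mono hI1f (hline1 z hz))
    (1 - lam) (by linarith) (by linarith)
  have h4 : I ≤ (I ^ (1 - 1 / q0) * M0) ^ lam * (M1 * I) ^ (1 - lam) := by
    refine hθ.trans ?_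
    rw [← ofReal_norm]
    refine (ENNReal.ofReal_le_ofReal h3).trans ?_
    rw [ENNReal.ofReal_mul (by positivity), ← ENNReal.ofReal_rpow_of_nonneg (by positivity) (by linarith),
      ← ENNReal.ofReal_rpow_of_nonneg (by positivity) (by linarith), ENNReal.ofReal_toReal hI0f, ENNReal.ofReal_toReal hI1f]
    apply le_of_eq; congr 2; ring
  by_cases hI0 : I = 0
  · rw [hI0]; exact zero_le
  have hlam' : 0 ≤ 1 - lam := by linarith
  have h5 : I ^ (1 - 1 / q) * I ^ (1 / q) ≤ I ^ (1 - 1 / q) * ((M0 : ℝ≥0∞) ^ lam * (M1 : ℝ≥0∞) ^ (1 - lam)) := by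
    calc _ = I := by rw [← ENNReal.rpow_add _ _ hI0 hIf.ne]; simp
      _ ≤ _ := h4
      _ = (I ^ ((1 - 1 / q0) * lam) * I ^ (1 - lam)) * ((M0 : ℝ≥0∞) ^ lam * (M1 : ℝ≥0∞) ^ (1 - lam)) := by
        rw [ENNReal.mul_rpow_of_nonneg _ _ hlam.le, ENNReal.mul_rpow_of_nonneg _ _ hlam', ← ENNReal.rpow_mul]; ring
      _ = _ := by
        rw [← ENNReal.rpow_add _ _ hI0 hIf.ne]
        congr 2
        have : lam / q0 = 1 / q := by rw [← hqe]; field_simp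
        rw [← this]; ring
  have h6 : I ^ (1 / q) ≤ (M0 : ℝ≥0∞) ^ lam * (M1 : ℝ≥0∞) ^ (1 - lam) := by
    refine (ENNReal.mul_le_mul_iff_right ?_ ?_).1 h5
    · exact (ENNReal.rpow_pos (pos_iff_ne_zero.2 hI0) hIf.ne).ne'
    · exact ENNReal.rpow_ne_top_of_ne_zero hI0 hIf.ne
  calc I = (I ^ (1 / q)) ^ q := by rw [← ENNReal.rpow_mul, one_div_mul_cancel hq.ne', ENNReal.rpow_one]
    _ ≤ _ := by gcongr



lemma core1 {X τ Y : Type*} [MeasurableSpace X] [MeasurableSpace τ] [MeasurableSpace Y]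
    (μ : Measure X) (ν : Measure τ) (η : Measure Y)
    [SigmaFinite μ] [IsFiniteMeasure ν] [SigmaFinite η]
    (k : (X × τ) × Y → ℂ) (hk : Measurable k) (B : ℝ) (hB : ∀ ω, ‖k ω‖ ≤ B) (M0 M1 : ℝ≥0)
    (h1 : ∀ x y, ∫⁻ t, ‖k ((x, t), y)‖ₑ ∂ν ≤ M1) (h2 : ∀ ω, ∫⁻ y, ‖k (ω, y)‖ₑ ∂η ≤ M1)
    (p0 q0 p q lam u : ℝ) (hp0 : 1 ≤ p0) (hq0 : p0 ≤ q0) (hlam : 0 < lam) (hlam1 : lam ≤ 1)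
    (hu0 : 0 ≤ u) (hu1 : u ≤ 1) (hp : 0 < p) (hpe : p * (lam / p0 + (1 - lam) * u) = 1)
    (hqe : q * lam = q0)
    (h0 : ∀ f : Y → ℂ, Measurable f → Integrable f η → ∫⁻ y, ‖f y‖ₑ ^ p0 ∂η ≤ 1 →
      ∫⁻ x, (∫⁻ t, ‖∫ y, k ((x, t), y) * f y ∂η‖ₑ ^ p0 ∂ν) ^ (q0 / p0) ∂μ ≤ (M0 : ℝ≥0∞) ^ q0)
    (f : Y → ℂ) (hfm : Measurable f) (hfi : Integrable f η) (hf1 : ∫⁻ y, ‖f y‖ₑ ^ p ∂η ≤ 1)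
    (c : ℝ) (hc : 1 ≤ c) (hfc : ∀ y, f y ≠ 0 → c⁻¹ ≤ ‖f y‖ ∧ ‖f y‖ ≤ c) :
    ∫⁻ x, (∫⁻ t, ‖∫ y, k ((x, t), y) * f y ∂η‖ₑ ^ p ∂ν) ^ (q / p) ∂μ
      ≤ ((M0 : ℝ≥0∞) ^ lam * (M1 : ℝ≥0∞) ^ (1 - lam)) ^ q := by
  have hq : 0 < q := by
    by_contra h
    push Not at h
    nlinarith
  let F : X × τ → ℂ := fun ω => ∫ y, k (ω, y) * f y ∂η
  have hFm : Measurable F := by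
    apply StronglyMeasurable.measurable
    apply StronglyMeasurable.integral_prod_right' (f := fun ω : (X × τ) × Y => k ω * f ω.2)
    exact (hk.mul (hfm.comp measurable_snd)).stronglyMeasurable
  let D : ℝ := ∫ y, B * ‖f y‖ ∂η
  have hFD : ∀ ω, ‖F ω‖ ≤ D := by
    intro ω
    refine norm_integral_le_of_norm_le (hfi.norm.const_mul B) (Filter.Eventually.of_forall fun y => ?_)
    rw [norm_mul]
    gcongr
    exact hB _
  let A := spanningSets μ
  have hAm : ∀ n, MeasurableSet (A n) := fun n => measurableSet_spanningSets μ n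
  let S0 : ℕ → Set (X × τ) := fun n => {ω | ω.1 ∈ A n ∧ ((n : ℝ) + 1)⁻¹ ≤ ‖F ω‖}
  have hS0m : ∀ n, MeasurableSet (S0 n) := fun n =>
    (measurable_fst (hAm n)).inter (measurableSet_le measurable_const hFm.norm)
  let Gn : ℕ → X × τ → ℝ≥0∞ := fun n => (S0 n).indicator (fun ω => ‖F ω‖ₑ)
  have hGnm : ∀ n, Measurable (Gn n) := fun n => Measurable.indicator (by fun_prop) (hS0m n)
  let V : ℕ → X → ℝ≥0∞ := fun n x => ∫⁻ t, Gn n (x, t) ^ p ∂ν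
  have hVm : ∀ n, Measurable (V n) := fun n =>
    Measurable.lintegral_prod_right' (f := fun ω => Gn n ω ^ p) ((hGnm n).pow_const p)
  let E : ℝ≥0∞ := ENNReal.ofReal D ^ p * ν univ
  have hE : E < ∞ := ENNReal.mul_lt_top (ENNReal.rpow_lt_top_of_nonneg hp.le (by simp)) (measure_lt_top _ _)
  have hVE : ∀ n x, V n x ≤ E := by
    intro n x
    calc V n x ≤ ∫⁻ t, ENNReal.ofReal D ^ p ∂ν := by
          apply lintegral_mono
          intro t
          simp only
          gcongr
          refine (indicator_le_self _ _ _).trans ?_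
          rw [← ofReal_norm]
          exact ENNReal.ofReal_le_ofReal (hFD _)
      _ = E := by rw [lintegral_const]
  have hVx : ∀ n x, x ∉ A n → V n x = 0 := by
    intro n x hx
    have : ∀ t, Gn n (x, t) = 0 := fun t => indicator_of_notMem (fun h => hx h.1) _
    simp [V, this, hp]
  let Vi : X → ℝ≥0∞ := fun x => ∫⁻ t, ‖F (x, t)‖ₑ ^ p ∂ν
  have hlim : ∀ x, Filter.Tendsto (fun n => V n x) Filter.atTop (nhds (Vi x)) := by
    intro x
    apply lintegral_tendsto_of_tendsto_of_monotone
    · intro n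
      have := hGnm n
      exact Measurable.aemeasurable (by fun_prop)
    · refine Filter.Eventually.of_forall fun t => ?_
      intro n m hnm
      simp only
      gcongr
      apply indicator_le_indicator_of_subset
      · intro ω hω
        refine ⟨monotone_spanningSets μ hnm hω.1, le_trans ?_ hω.2⟩
        gcongr
      · intro _; exact zero_le
    · refine Filter.Eventually.of_forall fun t => ?_
      apply tendsto_const_nhds.congr'
      by_cases hF0 : F (x, t) = 0
      · refine Filter.Eventually.of_forall fun n => ?_
        have : Gn n (x, t) = 0 := by
          simp only [Gn]
          by_cases h : (x, t) ∈ S0 n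
          · rw [indicator_of_mem h, hF0]; simp
          · rw [indicator_of_notMem h]
        simp only [this, hF0]; simp
      · have hF0' : 0 < ‖F (x, t)‖ := by simpa using hF0
        have e1 : ∀ᶠ n : ℕ in Filter.atTop, ((n : ℝ) + 1)⁻¹ ≤ ‖F (x, t)‖ := by
          have := (tendsto_one_div_add_atTop_nhds_zero_nat (𝕜 := ℝ)).eventually (gt_mem_nhds hF0')
          filter_upwards [this] with n hn
          rw [← one_div]; exact hn.le
        have e2 : ∀ᶠ n : ℕ in Filter.atTop, x ∈ A n := by
          filter_upwards [Filter.eventually_ge_atTop (spanningSetsIndex μ x)] with n hn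
          exact mem_spanningSets_of_index_le μ x hn
        filter_upwards [e1, e2] with n h1 h2
        have : Gn n (x, t) = ‖F (x, t)‖ₑ := indicator_of_mem (s := S0 n) ⟨h2, h1⟩ _
        simp only [this]
  let Xn : ℕ → Set X := fun n => {x | ENNReal.ofReal ((n : ℝ) + 1)⁻¹ ≤ V n x ^ (1 / p)}
  have hXnm : ∀ n, MeasurableSet (Xn n) := fun n => measurableSet_le measurable_const ((hVm n).pow_const _)
  let N : ℕ → X → ℝ := fun n => (Xn n).indicator (fun x => (V n x ^ (1 / p)).toReal)
  have hNm : ∀ n, Measurable (N n) := fun n =>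
    Measurable.indicator ((hVm n).pow_const _).ennreal_toReal (hXnm n)
  have hVf : ∀ n x, V n x ^ (1 / p) ≠ ∞ := fun n x =>
    (ENNReal.rpow_lt_top_of_nonneg (by positivity) ((hVE n x).trans_lt hE).ne).ne
  have hmain : ∀ n, ∫⁻ x, ENNReal.ofReal (N n x) ^ q ∂μ ≤ ((M0 : ℝ≥0∞) ^ lam * (M1 : ℝ≥0∞) ^ (1 - lam)) ^ q := by
    intro n
    let c' : ℝ := max (max c ((n : ℝ) + 1)) (max D (E ^ (1 / p)).toReal)
    have hc1 : c ≤ c' := (le_max_left _ _).trans (le_max_left _ _)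
    have hc2 : (n : ℝ) + 1 ≤ c' := (le_max_right _ _).trans (le_max_left _ _)
    have hc3 : D ≤ c' := (le_max_left _ _).trans (le_max_right _ _)
    have hc4 : (E ^ (1 / p)).toReal ≤ c' := (le_max_right _ _).trans (le_max_right _ _)
    have hc0 : 0 < c := by linarith
    have hci : c'⁻¹ ≤ ((n : ℝ) + 1)⁻¹ := by gcongr
    let S : Set (X × τ) := S0 n ∩ {ω | ω.1 ∈ Xn n}
    have hNx1 : ∀ x, x ∈ Xn n → N n x = (V n x ^ (1 / p)).toReal := fun x h => indicator_of_mem h _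
    have hNx0 : ∀ x, x ∉ Xn n → N n x = 0 := fun x h => indicator_of_notMem h _
    have hNlow : ∀ x, x ∈ Xn n → ((n : ℝ) + 1)⁻¹ ≤ N n x := by
      intro x hx
      rw [hNx1 x hx]
      exact (ENNReal.ofReal_le_iff_le_toReal (hVf n x)).1 hx
    refine core0 μ ν η k hk B hB M0 M1 h1 h2 p0 q0 p q lam u hp0 hq0 hlam hlam1 hu0 hu1 hp hpe hqe h0 f hfm hfi hf1
      c' (hc.trans hc1) (fun y hy => ⟨le_trans (by gcongr) (hfc y hy).1, (hfc y hy).2.trans hc1⟩) F (fun ω => rfl) hFm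
      S ((hS0m n).inter (measurable_fst (hXnm n))) (A n) (hAm n) (measure_spanningSets_lt_top μ n) (N n) (hNm n) ?_ ?_ ?_
    · intro x
      by_cases hx : x ∈ Xn n
      · right
        refine ⟨?_, hci.trans (hNlow x hx), ?_⟩
        · by_contra hA
          have h3 : ENNReal.ofReal ((n : ℝ) + 1)⁻¹ ≤ V n x ^ (1 / p) := hx
          rw [hVx n x hA, ENNReal.zero_rpow_of_pos (by positivity)] at h3
          simp at h3
          have : (0 : ℝ) < (n : ℝ) + 1 := by positivity
          linarith
        · rw [hNx1 x hx]
          refine le_trans (ENNReal.toReal_mono ?_ ?_) hc4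
          · exact (ENNReal.rpow_lt_top_of_nonneg (by positivity) hE.ne).ne
          · gcongr; exact hVE n x
      · left; exact hNx0 x hx
    · intro x t h
      refine ⟨hci.trans h.1.2, (hFD _).trans hc3, ?_⟩
      have := hNlow x h.2
      have h4 : (0 : ℝ) < ((n : ℝ) + 1)⁻¹ := by positivity
      linarith
    · intro x
      by_cases hx : x ∈ Xn n
      · rw [hNx1 x hx, ENNReal.ofReal_toReal (hVf n x), ← ENNReal.rpow_mul, one_div_mul_cancel hp.ne', ENNReal.rpow_one]
        apply lintegral_congr
        intro t
        congr 1
        by_cases h : (x, t) ∈ S0 n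
        · exact (indicator_of_mem (s := S) ⟨h, hx⟩ _).trans (indicator_of_mem (s := S0 n) h (fun ω => ‖F ω‖ₑ)).symm
        · exact (indicator_of_notMem (s := S) (fun h2 => h h2.1) _).trans (indicator_of_notMem (s := S0 n) h (fun ω => ‖F ω‖ₑ)).symm
      · rw [hNx0 x hx]
        have : ∀ t, S.indicator (fun ω => ‖F ω‖ₑ) (x, t) = 0 := fun t => indicator_of_notMem (fun h => hx h.2) _
        simp [this, hp]
  have hpt : ∀ x, Vi x ^ (q / p) ≤ Filter.liminf (fun n => ENNReal.ofReal (N n x) ^ q) Filter.atTop := by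
    intro x
    by_cases hV0 : Vi x = 0
    · rw [hV0, ENNReal.zero_rpow_of_pos (by positivity)]; exact zero_le
    have hl1 := ((ENNReal.continuous_rpow_const (y := 1 / p)).tendsto (Vi x)).comp (hlim x)
    have hpos : 0 < Vi x ^ (1 / p) := by
      rw [pos_iff_ne_zero]
      intro h
      rw [ENNReal.rpow_eq_zero_iff] at h
      rcases h with h | h
      · exact hV0 h.1
      · have : 0 < 1 / p := by positivity
        linarith [h.2]
    obtain ⟨v, hv0, hv⟩ := exists_between hpos
    have e1 := hl1.eventually (lt_mem_nhds hv)
    have e2 : ∀ᶠ n : ℕ in Filter.atTop, ENNReal.ofReal ((n : ℝ) + 1)⁻¹ < v := by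
      have h5 : Filter.Tendsto (fun n : ℕ => ENNReal.ofReal ((n : ℝ) + 1)⁻¹) Filter.atTop (nhds 0) := by
        have := ENNReal.tendsto_ofReal (tendsto_one_div_add_atTop_nhds_zero_nat (𝕜 := ℝ))
        simpa using this
      exact h5.eventually (gt_mem_nhds hv0)
    have hl2 : Filter.Tendsto (fun n => ENNReal.ofReal (N n x) ^ q) Filter.atTop (nhds (Vi x ^ (q / p))) := by
      refine Filter.Tendsto.congr' ?_ (((ENNReal.continuous_rpow_const (y := q / p)).tendsto (Vi x)).comp (hlim x))
      filter_upwards [e1, e2] with n h1 h2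
      have hx : x ∈ Xn n := (h2.trans h1).le
      have : N n x = (V n x ^ (1 / p)).toReal := indicator_of_mem hx _
      simp only [Function.comp]
      rw [this, ENNReal.ofReal_toReal (hVf n x), ← ENNReal.rpow_mul]
      congr 1; ring
    exact hl2.liminf_eq.ge
  calc _ = ∫⁻ x, Vi x ^ (q / p) ∂μ := rfl
    _ ≤ ∫⁻ x, Filter.liminf (fun n => ENNReal.ofReal (N n x) ^ q) Filter.atTop ∂μ := lintegral_mono hpt
    _ ≤ Filter.liminf (fun n => ∫⁻ x, ENNReal.ofReal (N n x) ^ q ∂μ) Filter.atTop :=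
        lintegral_liminf_le (fun n => by have := hNm n; fun_prop)
    _ ≤ _ := by
        apply Filter.liminf_le_of_le
        · isBoundedDefault
        · intro b hb
          obtain ⟨n, hn⟩ := hb.exists
          exact hn.trans (hmain n)

lemma core2 {X τ Y : Type*} [MeasurableSpace X] [MeasurableSpace τ] [MeasurableSpace Y]
    (μ : Measure X) (ν : Measure τ) (η : Measure Y)
    [SigmaFinite μ] [IsFiniteMeasure ν] [SigmaFinite η]
    (k : (X × τ) × Y → ℂ) (hk : Measurable k) (B : ℝ) (hB : ∀ ω, ‖k ω‖ ≤ B) (M0 M1 : ℝ≥0)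
    (h1 : ∀ x y, ∫⁻ t, ‖k ((x, t), y)‖ₑ ∂ν ≤ M1) (h2 : ∀ ω, ∫⁻ y, ‖k (ω, y)‖ₑ ∂η ≤ M1)
    (p0 q0 p q lam u : ℝ) (hp0 : 1 ≤ p0) (hq0 : p0 ≤ q0) (hlam : 0 < lam) (hlam1 : lam ≤ 1)
    (hu0 : 0 ≤ u) (hu1 : u ≤ 1) (hp : 0 < p) (hpe : p * (lam / p0 + (1 - lam) * u) = 1)
    (hqe : q * lam = q0)
    (h0 : ∀ f : Y → ℂ, Measurable f → Integrable f η → ∫⁻ y, ‖f y‖ₑ ^ p0 ∂η ≤ 1 →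
      ∫⁻ x, (∫⁻ t, ‖∫ y, k ((x, t), y) * f y ∂η‖ₑ ^ p0 ∂ν) ^ (q0 / p0) ∂μ ≤ (M0 : ℝ≥0∞) ^ q0)
    (f : Y → ℂ) (hfm : Measurable f) (hfi : Integrable f η) (hf1 : ∫⁻ y, ‖f y‖ₑ ^ p ∂η ≤ 1) :
    ∫⁻ x, (∫⁻ t, ‖∫ y, k ((x, t), y) * f y ∂η‖ₑ ^ p ∂ν) ^ (q / p) ∂μ
      ≤ ((M0 : ℝ≥0∞) ^ lam * (M1 : ℝ≥0∞) ^ (1 - lam)) ^ q := by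
  have hq : 0 < q := by
    by_contra h
    push Not at h
    nlinarith
  let U : ℕ → Set Y := fun n => {y | ((n : ℝ) + 1)⁻¹ ≤ ‖f y‖ ∧ ‖f y‖ ≤ (n : ℝ) + 1}
  have hU : ∀ n, MeasurableSet (U n) := fun n =>
    (measurableSet_le measurable_const hfm.norm).inter (measurableSet_le hfm.norm measurable_const)
  let fn : ℕ → Y → ℂ := fun n => (U n).indicator f
  have hfnm : ∀ n, Measurable (fn n) := fun n => hfm.indicator (hU n)
  have hfni : ∀ n, Integrable (fn n) η := fun n => hfi.indicator (hU n)
  have hfnle : ∀ n y, ‖fn n y‖ ≤ ‖f y‖ := fun n y => norm_indicator_le_norm_self _ _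
  have hmain : ∀ n, ∫⁻ x, (∫⁻ t, ‖∫ y, k ((x, t), y) * fn n y ∂η‖ₑ ^ p ∂ν) ^ (q / p) ∂μ
      ≤ ((M0 : ℝ≥0∞) ^ lam * (M1 : ℝ≥0∞) ^ (1 - lam)) ^ q := by
    intro n
    refine core1 μ ν η k hk B hB M0 M1 h1 h2 p0 q0 p q lam u hp0 hq0 hlam hlam1 hu0 hu1 hp hpe hqe h0 (fn n)
      (hfnm n) (hfni n) ?_ ((n : ℝ) + 1) (by simp) ?_
    · refine le_trans (lintegral_mono fun y => ?_) hf1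
      simp only
      gcongr
      rw [← ofReal_norm, ← ofReal_norm]
      exact ENNReal.ofReal_le_ofReal (hfnle n y)
    · intro y hy
      have hyU : y ∈ U n := by
        by_contra h
        exact hy (indicator_of_notMem h _)
      have : fn n y = f y := indicator_of_mem hyU _
      rw [this]; exact hyU
  have hconv : ∀ ω, Filter.Tendsto (fun n => ∫ y, k (ω, y) * fn n y ∂η) Filter.atTop (nhds (∫ y, k (ω, y) * f y ∂η)) := by
    intro ω
    apply tendsto_integral_of_dominated_convergence (fun y => B * ‖f y‖)
    · intro n
      have := hfnm n
      exact Measurable.aestronglyMeasurable (by fun_prop)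
    · exact hfi.norm.const_mul B
    · intro n
      refine Filter.Eventually.of_forall fun y => ?_
      rw [norm_mul]
      have hB0 : 0 ≤ B := (norm_nonneg _).trans (hB (ω, y))
      exact mul_le_mul (hB _) (hfnle n y) (norm_nonneg _) hB0
    · refine Filter.Eventually.of_forall fun y => ?_
      apply tendsto_const_nhds.congr'
      by_cases hy : f y = 0
      · refine Filter.Eventually.of_forall fun n => ?_
        have : fn n y = 0 := by
          have := hfnle n y
          rw [hy] at this
          simpa using this
        simp only [this, hy]
      · have hy' : 0 < ‖f y‖ := by simpa using hy
        have e1 : ∀ᶠ n : ℕ in Filter.atTop, ((n : ℝ) + 1)⁻¹ ≤ ‖f y‖ := by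
          have := (tendsto_one_div_add_atTop_nhds_zero_nat (𝕜 := ℝ)).eventually (gt_mem_nhds hy')
          filter_upwards [this] with n hn
          rw [← one_div]; exact hn.le
        have e2 : ∀ᶠ n : ℕ in Filter.atTop, ‖f y‖ ≤ (n : ℝ) + 1 := by
          filter_upwards [tendsto_natCast_atTop_atTop.eventually (Filter.eventually_ge_atTop ‖f y‖)] with n hn
          linarith
        filter_upwards [e1, e2] with n h1 h2
        have : fn n y = f y := indicator_of_mem (s := U n) ⟨h1, h2⟩ _
        simp only [this]
  have hFm : ∀ n, Measurable (fun ω => ‖∫ y, k (ω, y) * fn n y ∂η‖ₑ ^ p) := by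
    intro n
    apply Measurable.pow_const
    apply Measurable.enorm
    apply StronglyMeasurable.measurable
    apply StronglyMeasurable.integral_prod_right' (f := fun ω : (X × τ) × Y => k ω * fn n ω.2)
    exact (hk.mul ((hfnm n).comp measurable_snd)).stronglyMeasurable
  have hqp : 0 < q / p := by positivity
  have hpt : ∀ x, (∫⁻ t, ‖∫ y, k ((x, t), y) * f y ∂η‖ₑ ^ p ∂ν) ^ (q / p) ≤
      Filter.liminf (fun n => (∫⁻ t, ‖∫ y, k ((x, t), y) * fn n y ∂η‖ₑ ^ p ∂ν) ^ (q / p)) Filter.atTop := by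
    intro x
    have e1 : ∫⁻ t, ‖∫ y, k ((x, t), y) * f y ∂η‖ₑ ^ p ∂ν ≤
        Filter.liminf (fun n => ∫⁻ t, ‖∫ y, k ((x, t), y) * fn n y ∂η‖ₑ ^ p ∂ν) Filter.atTop := by
      calc _ = ∫⁻ t, Filter.liminf (fun n => ‖∫ y, k ((x, t), y) * fn n y ∂η‖ₑ ^ p) Filter.atTop ∂ν := by
            apply lintegral_congr
            intro t
            have := (((ENNReal.continuous_rpow_const (y := p)).comp continuous_enorm).tendsto _).comp (hconv (x, t))
            exact this.liminf_eq.symm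
        _ ≤ _ := lintegral_liminf_le (fun n => (hFm n).comp measurable_prodMk_left)
    refine (ENNReal.rpow_le_rpow e1 hqp.le).trans ?_
    exact ((ENNReal.orderIsoRpow (q / p) hqp).liminf_apply).le
  refine (lintegral_mono hpt).trans ?_
  refine (lintegral_liminf_le (fun n => ?_)).trans ?_
  · exact (Measurable.lintegral_prod_right' (hFm n)).pow_const _
  · apply Filter.liminf_le_of_le
    · isBoundedDefault
    · intro b hb
      obtain ⟨n, hn⟩ := hb.exists
      exact hn.trans (hmain n)



lemma sphere_univ_pos (d : ℕ) (hd : 2 ≤ d) : (volume : Measure (Euc d)).toSphere Set.univ ≠ 0 := by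
  have : Nontrivial (Euc d) := by
    have : Nonempty (Fin d) := ⟨⟨0, by omega⟩⟩
    infer_instance
  simp only [ne_eq, Measure.measure_univ_eq_zero]
  exact Measure.toSphere_ne_zero _

lemma sphere_prob (d : ℕ) (hd : 2 ≤ d) : IsProbabilityMeasure (sphereMeasure d) := by
  constructor
  rw [sphereMeasure, Measure.smul_apply, Measure.map_apply measurable_subtype_coe MeasurableSet.univ,
    preimage_univ, smul_eq_mul]
  exact ENNReal.inv_mul_cancel (sphere_univ_pos d hd) (measure_ne_top _ _)

lemma sphere_lintegral (d : ℕ) (g : Euc d → ℝ≥0∞) (hg : Measurable g) :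
    ∫⁻ y, g y ∂(sphereMeasure d) = ((volume : Measure (Euc d)).toSphere Set.univ)⁻¹ *
      ∫⁻ y, g y.1 ∂(volume : Measure (Euc d)).toSphere := by
  rw [sphereMeasure, lintegral_smul_measure, lintegral_map hg measurable_subtype_coe, smul_eq_mul]

lemma sphere_ae (d : ℕ) : ∀ᵐ y ∂(sphereMeasure d), ‖y‖ = 1 := by
  rw [sphereMeasure]
  apply Measure.ae_smul_measure
  rw [ae_map_iff measurable_subtype_coe.aemeasurable (measurableSet_eq_fun (by fun_prop) (by fun_prop))]
  exact Filter.Eventually.of_forall fun y => by simpa using y.2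

lemma polar (d : ℕ) (hd : 2 ≤ d) (g : Euc d → ℝ≥0∞) (hg : Measurable g) :
    ∫⁻ t in Ioi (0:ℝ), ENNReal.ofReal (t ^ (d - 1)) * ∫⁻ y, g (t • y.1) ∂(volume : Measure (Euc d)).toSphere
      = ∫⁻ x, g x := by
  have hmp := (volume : Measure (Euc d)).measurePreserving_homeomorphUnitSphereProd
  rw [finrank_euclideanSpace_fin] at hmp
  have h1 : ∫⁻ x, g x = ∫⁻ x : ({(0 : Euc d)}ᶜ : Set (Euc d)), g x.1 ∂((volume : Measure (Euc d)).comap (↑)) := by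
    have : Nontrivial (Euc d) := by
      have : Nonempty (Fin d) := ⟨⟨0, by omega⟩⟩
      infer_instance
    rw [lintegral_subtype_comap (measurableSet_singleton (0 : Euc d)).compl, restrict_compl_singleton]
  have h2 : ∀ x : ({(0 : Euc d)}ᶜ : Set (Euc d)), g x.1 =
      (fun z : sphere (0 : Euc d) 1 × Ioi (0:ℝ) => g (z.2.1 • z.1.1)) (homeomorphUnitSphereProd (Euc d) x) := by
    intro x
    have hx : ‖x.1‖ ≠ 0 := norm_ne_zero_iff.2 x.2
    simp [smul_smul, hx]
  have hm : Measurable (fun z : sphere (0 : Euc d) 1 × Ioi (0:ℝ) => g (z.2.1 • z.1.1)) := by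
    apply hg.comp
    fun_prop
  rw [h1]
  simp_rw [h2]
  rw [hmp.lintegral_comp hm, lintegral_prod_symm _ hm.aemeasurable]
  rw [Measure.volumeIoiPow, lintegral_withDensity_eq_lintegral_mul]
  · simp only [Pi.mul_apply]
    rw [← lintegral_subtype_comap measurableSet_Ioi]
  · fun_prop
  · exact Measurable.lintegral_prod_left' (f := fun z : sphere (0 : Euc d) 1 × Ioi (0:ℝ) => g (z.2.1 • z.1.1)) hm

/-- time integral bound -/
lemma time_bound (d : ℕ) (hd : 2 ≤ d) (g : Euc d → ℝ≥0∞) (hg : Measurable g) (v : Euc d) :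
    ∫⁻ t in Icc (1/2:ℝ) 4, ∫⁻ y, g (v - t • y) ∂(sphereMeasure d) ≤
      (2 ^ (d - 1) * ((volume : Measure (Euc d)).toSphere Set.univ)⁻¹) * ∫⁻ x, g x := by
  have hgv : Measurable (fun x => g (v - x)) := hg.comp (by fun_prop)
  have h1 : ∀ t ∈ Icc (1/2:ℝ) 4, ∫⁻ y, g (v - t • y) ∂(sphereMeasure d) ≤
      (2 ^ (d - 1) * ((volume : Measure (Euc d)).toSphere Set.univ)⁻¹) *
      (ENNReal.ofReal (t ^ (d - 1)) * ∫⁻ y, g (v - t • y.1) ∂(volume : Measure (Euc d)).toSphere) := by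
    intro t ht
    rw [sphere_lintegral d (fun y => g (v - t • y)) (hg.comp (by fun_prop))]
    have : 1 ≤ (2:ℝ≥0∞) ^ (d-1) * ENNReal.ofReal (t ^ (d - 1)) := by
      rw [ENNReal.ofReal_pow (by linarith [ht.1]), ← mul_pow]
      apply one_le_pow₀
      have : (2:ℝ≥0∞) = ENNReal.ofReal 2 := by simp
      rw [this, ← ENNReal.ofReal_mul (by norm_num), ENNReal.one_le_ofReal]
      linarith [ht.1]
    calc _ = 1 * (((volume : Measure (Euc d)).toSphere Set.univ)⁻¹ * ∫⁻ y, g (v - t • y.1) ∂(volume : Measure (Euc d)).toSphere) := by rw [one_mul]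
      _ ≤ _ := by
        refine (mul_le_mul_left this _).trans (le_of_eq ?_)
        ring
  refine (setLIntegral_mono' measurableSet_Icc h1).trans ?_
  refine (lintegral_mono_set (t := Ioi 0) (fun t ht => lt_of_lt_of_le (by norm_num) ht.1)).trans ?_
  rw [lintegral_const_mul, polar d hd _ hgv]
  · rw [lintegral_sub_left_eq_self]
  · apply Measurable.mul (by fun_prop)
    apply Measurable.lintegral_prod_right' (f := fun z : ℝ × sphere (0 : Euc d) 1 => g (v - z.1 • z.2.1))
    exact hg.comp (by fun_prop)



def bumpF (d : ℕ) (β₀ : ℝ → ℝ) : Euc d → ℂ := fun ξ => (β₀ ‖ξ‖ : ℂ)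

def psiS (d : ℕ) (β₀ : ℝ → ℝ) (s : ℝ) (v : Euc d) : ℂ := ((s ^ d : ℝ) : ℂ) * 𝓕⁻ (bumpF d β₀) (s • v)

def psiJ (d : ℕ) (β₀ : ℝ → ℝ) : ℕ → Euc d → ℂ
  | 0 => psiS d β₀ 1
  | (j + 1) => fun v => psiS d β₀ (2 ^ (j + 1)) v - psiS d β₀ (2 ^ j) v

lemma bumpF_smooth (d : ℕ) (β₀ : ℝ → ℝ) (hβ : IsBump β₀) : ContDiff ℝ (⊤ : ℕ∞) (bumpF d β₀) := by
  have h : ContDiff ℝ (⊤ : ℕ∞) (fun ξ : Euc d => β₀ ‖ξ‖) := by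
    rw [contDiff_iff_contDiffAt]
    intro ξ
    by_cases hξ : ξ = 0
    · subst hξ
      apply (contDiffAt_const (c := (1:ℝ))).congr_of_eventuallyEq
      filter_upwards [Metric.ball_mem_nhds (0 : Euc d) (show (0:ℝ) < 1/2 by norm_num)] with x hx
      apply hβ.2.1
      simpa using hx
    · exact hβ.1.contDiffAt.comp _ (contDiffAt_norm ℝ hξ)
  exact Complex.ofRealCLM.contDiff.comp h

lemma bumpF_supp (d : ℕ) (β₀ : ℝ → ℝ) (hβ : IsBump β₀) : HasCompactSupport (bumpF d β₀) := by
  apply HasCompactSupport.of_support_subset_isCompact (isCompact_closedBall (0 : Euc d) 1)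
  intro x hx
  by_contra h
  apply hx
  simp only [bumpF]
  rw [hβ.2.2 _ (by simpa using h)]
  simp

lemma psi_schwartz (d : ℕ) (β₀ : ℝ → ℝ) (hβ : IsBump β₀) :
    ∃ ψ : SchwartzMap (Euc d) ℂ, ∀ v, ψ v = 𝓕⁻ (bumpF d β₀) v := by
  refine ⟨𝓕⁻ ((bumpF_supp d β₀ hβ).toSchwartzMap (bumpF_smooth d β₀ hβ)), fun v => ?_⟩
  rw [SchwartzMap.fourierInv_coe]
  rfl

lemma bumpF_int (d : ℕ) (β₀ : ℝ → ℝ) (hβ : IsBump β₀) : Integrable (bumpF d β₀) :=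
  (bumpF_smooth d β₀ hβ).continuous.integrable_of_hasCompactSupport (bumpF_supp d β₀ hβ)

lemma fourierInv_scale (d : ℕ) (b : Euc d → ℂ) (s : ℝ) (hs : 0 < s) (v : Euc d) :
    𝓕⁻ (fun ξ => b (s⁻¹ • ξ)) v = ((s ^ d : ℝ) : ℂ) * 𝓕⁻ b (s • v) := by
  rw [Real.fourierInv_eq, Real.fourierInv_eq]
  have := Measure.integral_comp_inv_smul_of_nonneg (volume : Measure (Euc d))
    (fun ξ => Real.fourierChar (inner ℝ ξ (s • v)) • b ξ) hs.le
  rw [finrank_euclideanSpace_fin] at this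
  rw [Complex.real_smul] at this
  rw [← this]
  congr 1
  ext ξ
  rw [real_inner_smul_left, real_inner_smul_right, inv_mul_cancel_left₀ hs.ne']

lemma bumpF_scale_int (d : ℕ) (β₀ : ℝ → ℝ) (hβ : IsBump β₀) (s : ℝ) (hs : 0 < s) :
    Integrable (fun ξ => bumpF d β₀ (s⁻¹ • ξ)) :=
  (bumpF_int d β₀ hβ).comp_smul (inv_ne_zero hs.ne')

lemma betaJ_succ (d : ℕ) (β₀ : ℝ → ℝ) (j : ℕ) (ξ : Euc d) : (betaJ β₀ (j+1) ‖ξ‖ : ℂ) =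
    bumpF d β₀ (((2:ℝ) ^ (j+1))⁻¹ • ξ) - bumpF d β₀ (((2:ℝ) ^ j)⁻¹ • ξ) := by
  have h1 : ((2:ℝ) ^ (-(j + 1 : ℤ))) = ((2:ℝ) ^ (j+1))⁻¹ := by
    rw [zpow_neg]; norm_cast
  have h2 : ((2:ℝ) ^ (-(j : ℤ))) = ((2:ℝ) ^ j)⁻¹ := by
    rw [zpow_neg]; norm_cast
  simp only [betaJ, bumpF, norm_smul, h1, h2]
  simp

lemma betaJ_cont_int (d : ℕ) (β₀ : ℝ → ℝ) (hβ : IsBump β₀) (j : ℕ) :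
    Integrable (fun ξ : Euc d => (betaJ β₀ j ‖ξ‖ : ℂ)) := by
  cases j with
  | zero => exact bumpF_int d β₀ hβ
  | succ j =>
    simp_rw [betaJ_succ]
    exact (bumpF_scale_int d β₀ hβ _ (by positivity)).sub (bumpF_scale_int d β₀ hβ _ (by positivity))

lemma fourierInv_betaJ (d : ℕ) (β₀ : ℝ → ℝ) (hβ : IsBump β₀) (j : ℕ) (v : Euc d) :
    𝓕⁻ (fun ξ : Euc d => (betaJ β₀ j ‖ξ‖ : ℂ)) v = psiJ d β₀ j v := by
  cases j with
  | zero =>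
    simp [psiJ, psiS, betaJ]
    rfl
  | succ j =>
    simp_rw [betaJ_succ]
    simp only [psiJ, psiS]
    rw [← fourierInv_scale d _ _ (by positivity), ← fourierInv_scale d _ _ (by positivity)]
    simp only [Real.fourierInv_eq, smul_sub]
    have aux : ∀ s : ℝ, 0 < s → Integrable (fun ξ => Real.fourierChar (inner ℝ ξ v) • bumpF d β₀ (s⁻¹ • ξ)) := by
      intro s hs
      apply (bumpF_scale_int d β₀ hβ s hs).mono
      · apply AEStronglyMeasurable.smul
        · exact Continuous.aestronglyMeasurable (by fun_prop)
        · exact (bumpF_scale_int d β₀ hβ s hs).1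
      · simp
    rw [integral_sub (aux _ (by positivity)) (aux _ (by positivity))]

lemma fourier_mult (d : ℕ) (m f : Euc d → ℂ) (hm : Integrable m) (hf : Integrable f) (x : Euc d) :
    𝓕⁻ (fun ξ => m ξ * 𝓕 f ξ) x = ∫ y, 𝓕⁻ m (x - y) * f y := by
  simp only [Real.fourierInv_eq, Real.fourier_eq]
  simp_rw [← integral_mul_const, ← integral_const_mul]
  simp_rw [show ∀ (z : Circle) (g : Euc d → ℂ), z • ∫ y, g y = ∫ y, z • g y from fun z g => by
    simp only [Circle.smul_def]; exact (integral_smul _ _).symm]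
  rw [integral_integral_swap]
  · congr 1; ext y
    congr 1; ext ξ
    simp only [Circle.smul_def, smul_eq_mul]
    have : inner ℝ ξ (x - y) = inner ℝ ξ x + (-inner ℝ y ξ) := by
      rw [inner_sub_right, real_inner_comm y ξ]; ring
    rw [this, AddChar.map_add_eq_mul]
    push_cast
    ring
  · apply (hm.mul_prod hf).mono
    · simp only [Function.uncurry_def]
      apply AEStronglyMeasurable.smul
      · exact Continuous.aestronglyMeasurable (by fun_prop)
      · apply AEStronglyMeasurable.mul
        · exact hm.1.comp_fst
        · apply AEStronglyMeasurable.smul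
          · exact Continuous.aestronglyMeasurable (by fun_prop)
          · exact hf.1.comp_snd
    · simp [Function.uncurry_def]

lemma freqLoc_eq (d : ℕ) (β₀ : ℝ → ℝ) (hβ : IsBump β₀) (j : ℕ) (f : Euc d → ℂ) (hf : Integrable f) (x : Euc d) :
    freqLoc d β₀ j f x = ∫ y, psiJ d β₀ j (x - y) * f y := by
  rw [freqLoc, fourier_mult d _ f (betaJ_cont_int d β₀ hβ j) hf]
  simp_rw [fourierInv_betaJ d β₀ hβ]

lemma freqLoc_zero (d : ℕ) (β₀ : ℝ → ℝ) (j : ℕ) (f : Euc d → ℂ) (hf : ¬ Integrable f) (x : Euc d) :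
    freqLoc d β₀ j f x = 0 := by
  have : 𝓕 f = 0 := by
    ext ξ
    rw [Real.fourier_eq]
    apply integral_undef
    rwa [Real.fourierIntegral_convergent_iff]
  rw [freqLoc, this, Real.fourierInv_eq]
  simp




lemma psiS_cont (d : ℕ) (β₀ : ℝ → ℝ) (hβ : IsBump β₀) (s : ℝ) : Continuous (psiS d β₀ s) := by
  obtain ⟨ψ, hψ⟩ := psi_schwartz d β₀ hβ
  have : psiS d β₀ s = fun v => ((s ^ d : ℝ) : ℂ) * ψ (s • v) := by
    ext v; rw [psiS, hψ]
  rw [this]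
  have := ψ.continuous
  fun_prop

lemma psiJ_cont (d : ℕ) (β₀ : ℝ → ℝ) (hβ : IsBump β₀) (j : ℕ) : Continuous (psiJ d β₀ j) := by
  cases j with
  | zero => exact psiS_cont d β₀ hβ 1
  | succ j => exact (psiS_cont d β₀ hβ _).sub (psiS_cont d β₀ hβ _)

lemma psiS_L1 (d : ℕ) (β₀ : ℝ → ℝ) (hβ : IsBump β₀) :
    ∃ P : ℝ≥0, ∀ s : ℝ, 0 < s → ∫⁻ v, ‖psiS d β₀ s v‖ₑ ≤ P := by
  obtain ⟨ψ, hψ⟩ := psi_schwartz d β₀ hβ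
  have hi : Integrable (fun v => ψ v) := ψ.integrable
  refine ⟨(∫⁻ v, ‖ψ v‖ₑ).toNNReal, fun s hs => ?_⟩
  rw [ENNReal.coe_toNNReal hi.2.ne]
  have h1 : Integrable (fun v => ((s ^ d : ℝ) : ℂ) * ψ (s • v)) :=
    (hi.comp_smul hs.ne').const_mul _
  simp_rw [psiS, ← hψ]
  rw [← ofReal_integral_norm_eq_lintegral_enorm h1, ← ofReal_integral_norm_eq_lintegral_enorm hi]
  apply ENNReal.ofReal_le_ofReal
  apply le_of_eq
  simp_rw [norm_mul]
  rw [integral_const_mul, Measure.integral_comp_smul_of_nonneg _ (fun v => ‖ψ v‖) s (hR := hs.le), finrank_euclideanSpace_fin]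
  rw [Complex.norm_real, Real.norm_of_nonneg (by positivity), smul_eq_mul]
  field_simp

lemma psiJ_L1 (d : ℕ) (β₀ : ℝ → ℝ) (hβ : IsBump β₀) :
    ∃ P : ℝ≥0, ∀ j, ∫⁻ v, ‖psiJ d β₀ j v‖ₑ ≤ P := by
  obtain ⟨P, hP⟩ := psiS_L1 d β₀ hβ
  refine ⟨P + P, fun j => ?_⟩
  cases j with
  | zero => exact (hP 1 one_pos).trans (by simp)
  | succ j =>
    calc _ ≤ ∫⁻ v, (‖psiS d β₀ (2 ^ (j + 1)) v‖ₑ + ‖psiS d β₀ (2 ^ j) v‖ₑ) :=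
          lintegral_mono fun v => enorm_sub_le
      _ = _ := lintegral_add_left (psiS_cont d β₀ hβ _).enorm.measurable _
      _ ≤ _ := by
        push_cast
        exact add_le_add (hP _ (by positivity)) (hP _ (by positivity))

lemma psiS_bdd (d : ℕ) (β₀ : ℝ → ℝ) (hβ : IsBump β₀) (s : ℝ) : ∃ B : ℝ, ∀ v, ‖psiS d β₀ s v‖ ≤ B := by
  obtain ⟨ψ, hψ⟩ := psi_schwartz d β₀ hβ
  obtain ⟨B, hB⟩ := ψ.decay 0 0
  refine ⟨‖((s ^ d : ℝ) : ℂ)‖ * B, fun v => ?_⟩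
  rw [psiS, ← hψ, norm_mul]
  gcongr
  simpa using hB.2 (s • v)

lemma psiJ_bdd (d : ℕ) (β₀ : ℝ → ℝ) (hβ : IsBump β₀) (j : ℕ) : ∃ B : ℝ, ∀ v, ‖psiJ d β₀ j v‖ ≤ B := by
  cases j with
  | zero => exact psiS_bdd d β₀ hβ 1
  | succ j =>
    obtain ⟨B, hB⟩ := psiS_bdd d β₀ hβ (2 ^ (j+1))
    obtain ⟨B2, hB2⟩ := psiS_bdd d β₀ hβ (2 ^ j)
    exact ⟨B + B2, fun v => (norm_sub_le _ _).trans (add_le_add (hB v) (hB2 v))⟩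

lemma psiS_decay (d : ℕ) (β₀ : ℝ → ℝ) (hβ : IsBump β₀) :
    ∃ A : ℝ, 0 ≤ A ∧ ∀ s : ℝ, 0 < s → ∀ v, v ≠ 0 → ‖psiS d β₀ s v‖ ≤ A * (s ^ d)⁻¹ * (‖v‖ ^ (2 * d))⁻¹ := by
  obtain ⟨ψ, hψ⟩ := psi_schwartz d β₀ hβ
  obtain ⟨A, hA0, hA⟩ := ψ.decay (2 * d) 0
  refine ⟨A, hA0.le, fun s hs v hv => ?_⟩
  have hv' : 0 < ‖v‖ := norm_pos_iff.2 hv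
  have h := hA (s • v)
  simp only [norm_iteratedFDeriv_zero] at h
  rw [norm_smul, Real.norm_of_nonneg hs.le] at h
  rw [psiS, ← hψ, norm_mul, Complex.norm_real, Real.norm_of_nonneg (by positivity)]
  have h2 : ‖ψ (s • v)‖ ≤ A * ((s * ‖v‖) ^ (2 * d))⁻¹ := by
    rw [← div_eq_mul_inv, le_div_iff₀ (by positivity)]
    linarith
  calc _ ≤ s ^ d * (A * ((s * ‖v‖) ^ (2 * d))⁻¹) := by gcongr
    _ = _ := by
      rw [mul_pow, two_mul, pow_add]
      field_simp

lemma psiJ_decay (d : ℕ) (β₀ : ℝ → ℝ) (hβ : IsBump β₀) :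
    ∃ A : ℝ, 0 ≤ A ∧ ∀ j : ℕ, ∀ v, v ≠ 0 → ‖psiJ d β₀ j v‖ ≤ A * ((2 ^ j) ^ d)⁻¹ * (‖v‖ ^ (2 * d))⁻¹ := by
  obtain ⟨A, hA0, hA⟩ := psiS_decay d β₀ hβ
  refine ⟨A + A * 2 ^ d, by positivity, fun j v hv => ?_⟩
  have hv' : 0 < ‖v‖ := norm_pos_iff.2 hv
  cases j with
  | zero =>
    refine (hA 1 one_pos v hv).trans ?_
    simp only [pow_zero]
    gcongr
    have : 0 ≤ A * 2 ^ d := by positivity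
    linarith
  | succ j =>
    refine (norm_sub_le _ _).trans ((add_le_add (hA _ (by positivity) v hv) (hA _ (by positivity) v hv)).trans ?_)
    apply le_of_eq
    rw [pow_succ, mul_pow]
    field_simp

def Kj (d : ℕ) (χ β₀ : ℝ → ℝ) (j : ℕ) (z : Euc d × ℝ) : ℂ :=
  (χ z.2 : ℂ) * ∫ w, psiJ d β₀ j (z.1 - z.2 • w) ∂(sphereMeasure d)

lemma chi_bdd (χ : ℝ → ℝ) (hχ : IsCutoff χ) : ∃ B : ℝ≥0, ∀ t, ‖χ t‖ ≤ B := by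
  have hc : HasCompactSupport χ :=
    HasCompactSupport.of_support_subset_isCompact isCompact_Icc hχ.2.2
  obtain ⟨B, hB⟩ := hc.exists_bound_of_continuous hχ.1.continuous
  exact ⟨B.toNNReal, fun t => (hB t).trans (Real.le_coe_toNNReal B)⟩

lemma Kj_eq (d : ℕ) (hd : 2 ≤ d) (χ β₀ : ℝ → ℝ) (hβ : IsBump β₀) (j : ℕ)
    (f : Euc d → ℂ) (hf : Integrable f) (x : Euc d) (t : ℝ) :
    Aj d χ β₀ j f x t = ∫ y, Kj d χ β₀ j (x - y, t) * f y := by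
  have := sphere_prob d hd
  simp only [Aj, sphAvg, Kj, freqLoc_eq d β₀ hβ j f hf]
  simp_rw [mul_assoc, integral_const_mul]
  congr 1
  simp_rw [← integral_mul_const]
  rw [integral_integral_swap]
  · congr 1; ext y; congr 1; ext w
    rw [sub_right_comm]
  · obtain ⟨B, hB⟩ := psiJ_bdd d β₀ hβ j
    have hfs : Integrable (fun z : Euc d × Euc d => f z.2) ((sphereMeasure d).prod volume) := hf.comp_snd _
    simp only [Function.uncurry_def]
    apply hfs.bdd_mul (c := B)
    · have := psiJ_cont d β₀ hβ j
      exact Continuous.aestronglyMeasurable (by fun_prop)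
    · exact Filter.Eventually.of_forall fun z => hB _

lemma Kj_meas (d : ℕ) (hd : 2 ≤ d) (χ β₀ : ℝ → ℝ) (hχ : IsCutoff χ) (hβ : IsBump β₀) (j : ℕ) :
    Measurable (Kj d χ β₀ j) := by
  have := sphere_prob d hd
  have hc := hχ.1.continuous
  apply Measurable.mul
  · exact Continuous.measurable (by fun_prop)
  · apply StronglyMeasurable.measurable
    apply StronglyMeasurable.integral_prod_right (f := fun (z : Euc d × ℝ) w => psiJ d β₀ j (z.1 - z.2 • w))
    have := psiJ_cont d β₀ hβ j
    exact Continuous.stronglyMeasurable (by simp only [Function.uncurry_def]; fun_prop)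

lemma Kj_enorm (d : ℕ) (χ β₀ : ℝ → ℝ) (B : ℝ≥0) (hB : ∀ t, ‖χ t‖ ≤ B) (j : ℕ)
    (z : Euc d × ℝ) : ‖Kj d χ β₀ j z‖ₑ ≤ B * ∫⁻ w, ‖psiJ d β₀ j (z.1 - z.2 • w)‖ₑ ∂(sphereMeasure d) := by
  rw [Kj, enorm_mul]
  gcongr
  · rw [← enorm_norm, Complex.norm_real, enorm_norm]
    rw [enorm_le_coe]
    exact hB _
  · exact enorm_integral_le_lintegral_enorm _

lemma Kj_supp (d : ℕ) (χ β₀ : ℝ → ℝ) (hχ : IsCutoff χ) (j : ℕ) (v : Euc d) (t : ℝ)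
    (ht : t ∉ Icc (1/2:ℝ) 4) : Kj d χ β₀ j (v, t) = 0 := by
  have : χ t = 0 := by
    by_contra h
    exact ht (hχ.2.2 h)
  simp [Kj, this]

lemma Kj_bdd (d : ℕ) (hd : 2 ≤ d) (χ β₀ : ℝ → ℝ) (hχ : IsCutoff χ) (hβ : IsBump β₀) (j : ℕ) :
    ∃ B : ℝ, ∀ z, ‖Kj d χ β₀ j z‖ ≤ B := by
  have := sphere_prob d hd
  obtain ⟨B, hB⟩ := chi_bdd χ hχ
  obtain ⟨B2, hB2⟩ := psiJ_bdd d β₀ hβ j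
  refine ⟨B * B2, fun z => ?_⟩
  rw [Kj, norm_mul, Complex.norm_real]
  gcongr
  · exact hB _
  · refine (norm_integral_le_of_norm_le_const (Filter.Eventually.of_forall fun w => hB2 _)).trans ?_
    simp

lemma kernel_L1 (d : ℕ) (hd : 2 ≤ d) (χ β₀ : ℝ → ℝ) (hχ : IsCutoff χ) (hβ : IsBump β₀) :
    ∃ M : ℝ≥0, ∀ j, (∀ t, ∫⁻ v, ‖Kj d χ β₀ j (v, t)‖ₑ ≤ M) ∧ (∀ v, ∫⁻ t, ‖Kj d χ β₀ j (v, t)‖ₑ ≤ M) := by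
  have := sphere_prob d hd
  obtain ⟨B, hB⟩ := chi_bdd χ hχ
  obtain ⟨P, hP⟩ := psiJ_L1 d β₀ hβ
  set c : ℝ≥0∞ := (2 ^ (d - 1) * ((volume : Measure (Euc d)).toSphere Set.univ)⁻¹) with hc
  have hct : c ≠ ∞ := ENNReal.mul_ne_top (by simp) (ENNReal.inv_ne_top.2 (sphere_univ_pos d hd))
  refine ⟨B * P + B * (c.toNNReal * P), fun j => ⟨fun t => ?_, fun v => ?_⟩⟩
  · have hcont := psiJ_cont d β₀ hβ j
    calc _ ≤ ∫⁻ v, B * ∫⁻ w, ‖psiJ d β₀ j (v - t • w)‖ₑ ∂(sphereMeasure d) :=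
          lintegral_mono fun v => Kj_enorm d χ β₀ B hB j (v, t)
      _ = B * ∫⁻ v, ∫⁻ w, ‖psiJ d β₀ j (v - t • w)‖ₑ ∂(sphereMeasure d) := by
          rw [lintegral_const_mul' _ _ (by simp)]
      _ = B * ∫⁻ w, (∫⁻ v, ‖psiJ d β₀ j (v - t • w)‖ₑ) ∂(sphereMeasure d) := by
          rw [lintegral_lintegral_swap]
          exact Continuous.aemeasurable (by simp only [Function.uncurry_def]; fun_prop)
      _ = B * ∫⁻ w, (∫⁻ v, ‖psiJ d β₀ j v‖ₑ) ∂(sphereMeasure d) := by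
          congr 2; ext w
          exact lintegral_sub_right_eq_self (fun v => ‖psiJ d β₀ j v‖ₑ) (t • w)
      _ ≤ B * P := by
          gcongr
          rw [lintegral_const]; simpa using hP j
      _ ≤ _ := by push_cast; exact le_self_add
  · have hcont := psiJ_cont d β₀ hβ j
    have h1 : ∫⁻ t, ‖Kj d χ β₀ j (v, t)‖ₑ = ∫⁻ t in Icc (1/2:ℝ) 4, ‖Kj d χ β₀ j (v, t)‖ₑ := by
      symm
      apply setLIntegral_eq_of_support_subset
      intro t ht
      by_contra h
      apply ht
      simp [Kj_supp d χ β₀ hχ j v t h]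
    rw [h1]
    calc _ ≤ ∫⁻ t in Icc (1/2:ℝ) 4, B * ∫⁻ w, ‖psiJ d β₀ j (v - t • w)‖ₑ ∂(sphereMeasure d) :=
          lintegral_mono fun t => Kj_enorm d χ β₀ B hB j (v, t)
      _ = B * ∫⁻ t in Icc (1/2:ℝ) 4, ∫⁻ w, ‖psiJ d β₀ j (v - t • w)‖ₑ ∂(sphereMeasure d) := by
          rw [lintegral_const_mul' _ _ (by simp)]
      _ ≤ B * (c * P) := by
          gcongr
          refine (time_bound d hd _ hcont.enorm.measurable v).trans ?_
          gcongr
          exact hP j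
      _ ≤ _ := by push_cast; rw [ENNReal.coe_toNNReal hct]; exact le_add_self

lemma kernel_decay (d : ℕ) (hd : 2 ≤ d) (χ β₀ : ℝ → ℝ) (hχ : IsCutoff χ) (hβ : IsBump β₀) :
    ∃ A : ℝ, 0 ≤ A ∧ ∀ j v t, 8 ≤ ‖v‖ → ‖Kj d χ β₀ j (v, t)‖ ≤ A * ((2 ^ j) ^ d)⁻¹ * (‖v‖ ^ (2 * d))⁻¹ := by
  have := sphere_prob d hd
  obtain ⟨B, hB⟩ := chi_bdd χ hχ
  obtain ⟨A, hA0, hA⟩ := psiJ_decay d β₀ hβ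
  refine ⟨B * (A * 2 ^ (2 * d)), by positivity, fun j v t hv => ?_⟩
  by_cases ht : t ∈ Icc (1/2:ℝ) 4
  · rw [Kj, norm_mul, Complex.norm_real]
    have h1 : ∀ᵐ w ∂(sphereMeasure d), ‖psiJ d β₀ j (v - t • w)‖ ≤ A * ((2 ^ j) ^ d)⁻¹ * ((‖v‖ / 2) ^ (2 * d))⁻¹ := by
      filter_upwards [sphere_ae d] with w hw
      have h2 : ‖t • w‖ ≤ 4 := by
        rw [norm_smul, hw, mul_one, Real.norm_of_nonneg (by linarith [ht.1])]; exact ht.2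
      have h3 : ‖v‖ / 2 ≤ ‖v - t • w‖ := by
        have := norm_sub_norm_le v (t • w)
        linarith
      have h4 : v - t • w ≠ 0 := by
        rw [← norm_pos_iff]; linarith
      refine (hA j _ h4).trans ?_
      gcongr
    have h5 := norm_integral_le_of_norm_le_const h1
    calc _ ≤ B * (A * ((2 ^ j) ^ d)⁻¹ * ((‖v‖ / 2) ^ (2 * d))⁻¹) := by
          gcongr
          · exact hB _
          · simpa using h5
      _ = _ := by
        rw [div_pow, inv_div]; ring
  · rw [Kj_supp d χ β₀ hχ j v t ht]
    simp; positivity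



lemma wHolder {α : Type*} [MeasurableSpace α] (μ : Measure α) (w g : α → ℝ≥0∞) (hw : Measurable w)
    (hg : Measurable g) (p : ℝ) (hp : 1 ≤ p) :
    (∫⁻ a, w a * g a ∂μ) ^ p ≤ (∫⁻ a, w a ∂μ) ^ (p - 1) * ∫⁻ a, w a * g a ^ p ∂μ := by
  have hp0 : 0 < p := by linarith
  have h1p : 0 ≤ 1 / p := by positivity
  have h1p' : 0 ≤ 1 - 1 / p := by
    rw [sub_nonneg, div_le_one hp0]; exact hp
  have h := ENNReal.lintegral_mul_norm_pow_le (μ := μ) (f := fun a => w a * g a ^ p) (g := w)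
    (by fun_prop) (by fun_prop) (p := 1 / p) (q := 1 - 1 / p) h1p h1p' (by ring)
  have e : ∀ a, (w a * g a ^ p) ^ (1 / p) * w a ^ (1 - 1 / p) = w a * g a := by
    intro a
    rw [ENNReal.mul_rpow_of_nonneg _ _ h1p, ← ENNReal.rpow_mul, mul_one_div_cancel hp0.ne', ENNReal.rpow_one,
      mul_right_comm, ← ENNReal.rpow_add_of_nonneg _ _ h1p h1p']
    simp
  simp only [e] at h
  calc _ ≤ ((∫⁻ a, w a * g a ^ p ∂μ) ^ (1 / p) * (∫⁻ a, w a ∂μ) ^ (1 - 1 / p)) ^ p := by gcongr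
    _ = _ := by
      rw [ENNReal.mul_rpow_of_nonneg _ _ hp0.le, ← ENNReal.rpow_mul, ← ENNReal.rpow_mul,
        one_div_mul_cancel hp0.ne', ENNReal.rpow_one, mul_comm]
      congr 2
      field_simp

/-- Jensen: `∫ g^r ≤ ...` for finite measures -/
lemma finHolder {α : Type*} [MeasurableSpace α] (μ : Measure α) (g : α → ℝ≥0∞)
    (hg : Measurable g) (r p : ℝ) (hr : 0 < r) (hp : r ≤ p) :
    (∫⁻ a, g a ^ r ∂μ) ^ (p / r) ≤ (μ univ) ^ (p / r - 1) * ∫⁻ a, g a ^ p ∂μ := by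
  have h := wHolder μ (fun _ => 1) (fun a => g a ^ r) (by fun_prop) (by fun_prop) (p / r) (by rwa [one_le_div hr])
  simp only [one_mul, lintegral_one, ← ENNReal.rpow_mul] at h
  rwa [mul_div_cancel₀ _ hr.ne'] at h

lemma add_rpow_le2 (a b : ℝ≥0∞) (e : ℝ) (he : 0 ≤ e) : (a + b) ^ e ≤ 2 ^ e * (a ^ e + b ^ e) := by
  have h1 : a + b ≤ 2 * max a b := by
    rw [two_mul]; exact add_le_add (le_max_left _ _) (le_max_right _ _)
  calc _ ≤ (2 * max a b) ^ e := by gcongr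
    _ = 2 ^ e * (max a b) ^ e := ENNReal.mul_rpow_of_nonneg _ _ he
    _ ≤ _ := by
      gcongr
      rcases max_choice a b with h | h <;> rw [h]
      · exact le_self_add
      · exact le_add_self

lemma conv_le (d : ℕ) (κ g : Euc d → ℝ≥0∞) (hκ : Measurable κ) (hκ1 : ∀ v, κ v ≤ 1) (hg : Measurable g)
    (hg1 : ∫⁻ y, g y ≤ 1) (e : ℝ) (he : 1 ≤ e) :
    ∫⁻ x, (∫⁻ y, κ (x - y) * g y) ^ e ≤ ∫⁻ v, κ v := by
  have hm : Measurable (fun z : Euc d × Euc d => κ (z.1 - z.2) * g z.2) := by fun_prop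
  have h1 : ∀ x, (∫⁻ y, κ (x - y) * g y) ^ e ≤ ∫⁻ y, κ (x - y) * g y := by
    intro x
    have : ∫⁻ y, κ (x - y) * g y ≤ 1 := by
      refine le_trans (lintegral_mono fun y => ?_) hg1
      calc _ ≤ 1 * g y := by gcongr; exact hκ1 _
        _ = _ := one_mul _
    calc _ ≤ (∫⁻ y, κ (x - y) * g y) ^ (1:ℝ) := ENNReal.rpow_le_rpow_of_exponent_ge this he
      _ = _ := ENNReal.rpow_one _
  calc _ ≤ ∫⁻ x, ∫⁻ y, κ (x - y) * g y := lintegral_mono h1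
    _ = ∫⁻ y, ∫⁻ x, κ (x - y) * g y := lintegral_lintegral_swap hm.aemeasurable
    _ = ∫⁻ y, (∫⁻ v, κ v) * g y := by
      congr 1; ext y
      rw [lintegral_mul_const _ (by fun_prop), lintegral_sub_right_eq_self κ y]
    _ = (∫⁻ v, κ v) * ∫⁻ y, g y := lintegral_const_mul _ hg
    _ ≤ (∫⁻ v, κ v) * 1 := by gcongr
    _ = _ := mul_one _

def tailK (d : ℕ) (v : Euc d) : ℝ≥0∞ := ENNReal.ofReal ((1 + ‖v‖) ^ (-(2 * d : ℝ)))

lemma tailK_meas (d : ℕ) : Measurable (tailK d) := by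
  unfold tailK; fun_prop

lemma tailK_le (d : ℕ) (v : Euc d) : tailK d v ≤ 1 := by
  rw [tailK, ENNReal.ofReal_le_one]
  apply Real.rpow_le_one_of_one_le_of_nonpos
  · linarith [norm_nonneg v]
  · simp

lemma tailK_fin (d : ℕ) (hd : 2 ≤ d) : ∫⁻ v, tailK d v ≠ ∞ := by
  have hd' : (2:ℝ) ≤ d := by exact_mod_cast hd
  have := integrable_one_add_norm (E := Euc d) (μ := volume) (r := 2 * d) (by
    rw [finrank_euclideanSpace_fin]; linarith)
  have h2 := this.2
  rw [hasFiniteIntegral_iff_ofReal (Filter.Eventually.of_forall fun v => by positivity)] at h2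
  exact h2.ne

lemma tailK_ge (d : ℕ) (v : Euc d) (hv : 8 ≤ ‖v‖) : ENNReal.ofReal ((‖v‖ ^ (2 * d))⁻¹) ≤ 2 ^ (2 * d) * tailK d v := by
  have h2 : ((2:ℝ≥0∞) ^ (2 * d)) = ENNReal.ofReal (2 ^ (2 * d)) := by
    rw [ENNReal.ofReal_pow (by norm_num)]; simp
  rw [tailK, h2, ← ENNReal.ofReal_mul (by positivity)]
  apply ENNReal.ofReal_le_ofReal
  have e : (1 + ‖v‖) ^ (-(2 * d : ℝ)) = ((1 + ‖v‖) ^ (2 * d))⁻¹ := by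
    rw [Real.rpow_neg (by positivity)]
    norm_cast
  rw [e, ← div_eq_mul_inv, le_div_iff₀ (by positivity), inv_mul_le_iff₀ (by positivity), ← mul_pow]
  gcongr
  linarith

/-- tail estimate -/
lemma tail_est (d : ℕ) (g : Euc d → ℝ≥0∞) (hg : Measurable g) (p q : ℝ) (hp : 1 ≤ p) (hpq : p ≤ q)
    (hg1 : ∫⁻ y, g y ^ p ≤ 1) :
    ∫⁻ x, (∫⁻ y, tailK d (x - y) * g y) ^ q ≤ (∫⁻ v, tailK d v) ^ ((p - 1) * (q / p) + 1) := by
  have hp0 : 0 < p := by linarith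
  have hqp : 1 ≤ q / p := by rwa [one_le_div hp0]
  have hm := tailK_meas d
  set k := ∫⁻ v, tailK d v with hk
  have h1 : ∀ x, (∫⁻ y, tailK d (x - y) * g y) ^ q ≤ k ^ ((p - 1) * (q / p)) * (∫⁻ y, tailK d (x - y) * g y ^ p) ^ (q / p) := by
    intro x
    have := wHolder volume (fun y => tailK d (x - y)) g (by fun_prop) hg p hp
    rw [lintegral_sub_left_eq_self (tailK d) x] at this
    calc _ = ((∫⁻ y, tailK d (x - y) * g y) ^ p) ^ (q / p) := by
          rw [← ENNReal.rpow_mul, mul_div_cancel₀ _ hp0.ne']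
      _ ≤ _ := ENNReal.rpow_le_rpow this (by linarith)
      _ = _ := by
        rw [ENNReal.mul_rpow_of_nonneg _ _ (by linarith), ← ENNReal.rpow_mul]
  have hm2 : Measurable fun x => (∫⁻ y, tailK d (x - y) * g y ^ p) ^ (q / p) := by
    apply Measurable.pow_const
    apply Measurable.lintegral_prod_right' (f := fun z : Euc d × Euc d => tailK d (z.1 - z.2) * g z.2 ^ p)
    fun_prop
  calc _ ≤ _ := lintegral_mono h1
    _ = k ^ ((p - 1) * (q / p)) * ∫⁻ x, (∫⁻ y, tailK d (x - y) * g y ^ p) ^ (q / p) := lintegral_const_mul _ hm2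
    _ ≤ k ^ ((p - 1) * (q / p)) * k := by
      gcongr
      exact conv_le d _ (fun y => g y ^ p) hm (tailK_le d) (by fun_prop) hg1 _ hqp
    _ = _ := by
      rw [ENNReal.rpow_add_of_nonneg _ _ (mul_nonneg (by linarith) (by linarith)) zero_le_one, ENNReal.rpow_one]



def TK {d : ℕ} (K : Euc d × ℝ → ℂ) (f : Euc d → ℂ) (x : Euc d) (t : ℝ) : ℂ := ∫ y, K (x - y, t) * f y

lemma TK_meas {d : ℕ} (K : Euc d × ℝ → ℂ) (hK : Measurable K) (f : Euc d → ℂ) (hf : Measurable f) :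
    Measurable (fun z : Euc d × ℝ => TK K f z.1 z.2) := by
  apply StronglyMeasurable.measurable
  apply StronglyMeasurable.integral_prod_right (f := fun (z : Euc d × ℝ) y => K (z.1 - y, z.2) * f y)
  apply Measurable.stronglyMeasurable
  simp only [Function.uncurry_def]
  fun_prop

lemma TK_int {d : ℕ} (K : Euc d × ℝ → ℂ) (hK : Measurable K) (B : ℝ) (hB : ∀ z, ‖K z‖ ≤ B)
    (f : Euc d → ℂ) (hf : Integrable f) (x : Euc d) (t : ℝ) : Integrable (fun y => K (x - y, t) * f y) := by
  apply hf.bdd_mul (c := B)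
  · exact Measurable.aestronglyMeasurable (by fun_prop)
  · exact Filter.Eventually.of_forall fun y => hB _

lemma TK_enorm {d : ℕ} (K : Euc d × ℝ → ℂ) (f : Euc d → ℂ) (x : Euc d) (t : ℝ) :
    ‖TK K f x t‖ₑ ≤ ∫⁻ y, ‖K (x - y, t)‖ₑ * ‖f y‖ₑ := by
  refine (enorm_integral_le_lintegral_enorm _).trans (le_of_eq ?_)
  simp_rw [enorm_mul]

lemma local_pt {d : ℕ} (K : Euc d × ℝ → ℂ) (hK : Measurable K) (B : ℝ) (hB : ∀ z, ‖K z‖ ≤ B)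
    (c : ℝ≥0∞) (hc : c ≠ ∞) (hdec : ∀ v t, 8 ≤ ‖v‖ → ‖K (v, t)‖ₑ ≤ c * tailK d v)
    (f : Euc d → ℂ) (hf : Integrable f) (a x : Euc d) (hx : ‖x - a‖ < 1) (t : ℝ) :
    ‖TK K f x t‖ₑ ≤ ‖TK K ((ball a 9).indicator f) x t‖ₑ + c * ∫⁻ y, tailK d (x - y) * ‖f y‖ₑ := by
  have hs : TK K f x t = TK K ((ball a 9).indicator f) x t + TK K ((ball a 9)ᶜ.indicator f) x t := by
    rw [TK, TK, TK, ← integral_add (TK_int K hK B hB _ (hf.indicator measurableSet_ball) x t)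
      (TK_int K hK B hB _ (hf.indicator measurableSet_ball.compl) x t)]
    congr 1; ext y
    rw [← mul_add]
    congr 1
    exact (indicator_self_add_compl_apply (ball a 9) f y).symm
  rw [hs]
  refine (enorm_add_le _ _).trans ?_
  gcongr
  refine (TK_enorm _ _ _ _).trans ?_
  rw [← lintegral_const_mul' _ _ hc]
  apply lintegral_mono
  intro y
  simp only
  by_cases hy : y ∈ ball a 9
  · rw [indicator_of_notMem (by simpa using hy)]; simp
  · rw [indicator_of_mem (by exact hy), ← mul_assoc]
    gcongr
    apply hdec
    rw [mem_ball, dist_eq_norm] at hy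
    have h1 : ‖y - a‖ ≤ ‖x - a‖ + ‖x - y‖ := by
      have : y - a = (x - a) - (x - y) := by abel
      rw [this]; exact norm_sub_le _ _
    linarith

lemma localize (d : ℕ) (hd : 2 ≤ d) (ρ p q : ℝ) (hρ : 1 ≤ ρ) (hρp : ρ ≤ p) (hpq : p ≤ q) :
    ∃ C1 C2 : ℝ≥0, ∀ (K : Euc d × ℝ → ℂ) (_ : Measurable K) (B : ℝ) (_ : ∀ z, ‖K z‖ ≤ B)
    (c D : ℝ≥0) (_ : ∀ v t, 8 ≤ ‖v‖ → ‖K (v, t)‖ₑ ≤ c * tailK d v)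
    (_ : ∀ g : Euc d → ℂ, Measurable g → Integrable g → ∫⁻ y, ‖g y‖ₑ ^ ρ ≠ ∞ →
      ∫⁻ x, (∫⁻ t in Icc (1/2:ℝ) 4, ‖TK K g x t‖ₑ ^ ρ) ^ (q / ρ) ≤ D ^ q * (∫⁻ y, ‖g y‖ₑ ^ ρ) ^ (q / ρ))
    (f : Euc d → ℂ) (_ : Measurable f) (_ : Integrable f) (_ : ∫⁻ y, ‖f y‖ₑ ^ p ≤ 1),
    ∫⁻ x, (∫⁻ t in Icc (1/2:ℝ) 4, ‖TK K f x t‖ₑ ^ ρ) ^ (q / ρ) ≤ C1 * D ^ q + C2 * c ^ q := by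
  have hρ0 : 0 < ρ := by linarith
  have hp0 : 0 < p := by linarith
  have hq0 : 0 < q := by linarith
  have hqρ : 0 ≤ q / ρ := by positivity
  have hqp1 : 1 ≤ q / p := by rwa [one_le_div hp0]
  have hpρ1 : 1 ≤ p / ρ := by rwa [one_le_div hρ0]
  set I := volume (Icc (1/2:ℝ) 4) with hI
  have hIf : I ≠ ∞ := measure_Icc_lt_top.ne
  set U := volume (ball (0 : Euc d) 1) with hU
  have hUf : U ≠ ∞ := measure_ball_lt_top.ne
  have hU0 : U ≠ 0 := (measure_ball_pos _ _ one_pos).ne'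
  set V := volume (ball (0 : Euc d) 9) with hV
  have hVf : V ≠ ∞ := measure_ball_lt_top.ne
  set k := ∫⁻ v, tailK d v with hk
  have hkf : k ≠ ∞ := tailK_fin d hd
  set W : ℝ≥0∞ := (2 ^ ρ) ^ (q / ρ) * 2 ^ (q / ρ) with hW
  have hWf : W ≠ ∞ := ENNReal.mul_ne_top (ENNReal.rpow_ne_top_of_nonneg hqρ (ENNReal.rpow_ne_top_of_nonneg hρ0.le (by simp)))
    (ENNReal.rpow_ne_top_of_nonneg hqρ (by simp))
  set c1 : ℝ≥0∞ := U⁻¹ * (W * (V ^ ((p / ρ - 1) * (q / p)) * V)) with hc1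
  have hc1f : c1 ≠ ∞ := by
    refine ENNReal.mul_ne_top (ENNReal.inv_ne_top.2 hU0) (ENNReal.mul_ne_top hWf (ENNReal.mul_ne_top ?_ hVf))
    exact ENNReal.rpow_ne_top_of_nonneg (mul_nonneg (by linarith) (by linarith)) hVf
  set c2 : ℝ≥0∞ := W * (I ^ (q / ρ) * k ^ ((p - 1) * (q / p) + 1)) with hc2
  have hc2f : c2 ≠ ∞ := by
    refine ENNReal.mul_ne_top hWf (ENNReal.mul_ne_top (ENNReal.rpow_ne_top_of_nonneg hqρ hIf) ?_)
    exact ENNReal.rpow_ne_top_of_nonneg (add_nonneg (mul_nonneg (by linarith) (by linarith)) zero_le_one) hkf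
  refine ⟨c1.toNNReal, c2.toNNReal, ?_⟩
  intro K hK B hB c D hdec H f hf hfi hf1
  rw [ENNReal.coe_toNNReal hc1f, ENNReal.coe_toNNReal hc2f]
  set Φ : Euc d → ℝ≥0∞ := fun x => (∫⁻ t in Icc (1/2:ℝ) 4, ‖TK K f x t‖ₑ ^ ρ) ^ (q / ρ) with hΦ
  have hmeasΦ : ∀ g : Euc d → ℂ, Measurable g → Measurable (fun x => (∫⁻ t in Icc (1/2:ℝ) 4, ‖TK K g x t‖ₑ ^ ρ) ^ (q / ρ)) := by
    intro g hg
    apply Measurable.pow_const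
    apply Measurable.lintegral_prod_right' (f := fun z : Euc d × ℝ => ‖TK K g z.1 z.2‖ₑ ^ ρ)
    exact (TK_meas K hK g hg).enorm.pow_const _
  have hΦm : Measurable Φ := hmeasΦ f hf
  set G : Euc d → ℝ≥0∞ := fun x => ∫⁻ y, tailK d (x - y) * ‖f y‖ₑ with hG
  have htm := tailK_meas d
  have hGm : Measurable G := by
    apply Measurable.lintegral_prod_right' (f := fun z : Euc d × Euc d => tailK d (z.1 - z.2) * ‖f z.2‖ₑ)
    fun_prop
  set E : Euc d → ℝ≥0∞ := fun x => I ^ (q / ρ) * (c * G x) ^ q with hE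
  have hEm : Measurable E := by fun_prop
  have hEi : ∫⁻ x, E x ≤ I ^ (q / ρ) * k ^ ((p - 1) * (q / p) + 1) * c ^ q := by
    have h1 := tail_est d (fun y => ‖f y‖ₑ) hf.enorm p q (by linarith) hpq hf1
    simp only [hE, ENNReal.mul_rpow_of_nonneg _ _ hq0.le]
    rw [lintegral_const_mul _ (by fun_prop), lintegral_const_mul _ (by fun_prop)]
    calc _ ≤ I ^ (q / ρ) * (c ^ q * k ^ ((p - 1) * (q / p) + 1)) := by gcongr
      _ = _ := by ring
  set u : Euc d → ℝ≥0∞ := (ball (0 : Euc d) 1).indicator 1 with hu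
  have hum : Measurable u := measurable_one.indicator measurableSet_ball
  have hui : ∫⁻ v, u v = U := by rw [hu, lintegral_indicator_one measurableSet_ball]
  set b : Euc d → ℝ≥0∞ := (ball (0 : Euc d) 9).indicator 1 with hb
  have hbm : Measurable b := measurable_one.indicator measurableSet_ball
  have hbi : ∫⁻ v, b v = V := by rw [hb, lintegral_indicator_one measurableSet_ball]
  have hb1 : ∀ v, b v ≤ 1 := fun v => indicator_le (fun _ _ => le_rfl) v
  -- pointwise in a
  have hloc : ∀ a, ∫⁻ x, u (x - a) * Φ x ≤ W * (D ^ q * V ^ ((p / ρ - 1) * (q / p)) * (∫⁻ y, b (a - y) * ‖f y‖ₑ ^ p) ^ (q / p)) + W * ∫⁻ x, u (x - a) * E x := by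
    intro a
    set g := (ball a 9).indicator f with hg
    have hgm : Measurable g := hf.indicator measurableSet_ball
    have hgi : Integrable g := hfi.indicator measurableSet_ball
    have hgρ : ∀ s : ℝ, 0 < s → ∫⁻ y, ‖g y‖ₑ ^ s = ∫⁻ y in ball a 9, ‖f y‖ₑ ^ s := by
      intro s hs
      rw [← lintegral_indicator measurableSet_ball]
      congr 1; ext y
      by_cases hy : y ∈ ball a 9
      · rw [hg, indicator_of_mem hy, indicator_of_mem hy]
      · rw [hg, indicator_of_notMem hy, indicator_of_notMem hy]; simp [hs]
    have hbp : ∫⁻ y in ball a 9, ‖f y‖ₑ ^ p = ∫⁻ y, b (a - y) * ‖f y‖ₑ ^ p := by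
      rw [← lintegral_indicator measurableSet_ball]
      congr 1; ext y
      by_cases hy : y ∈ ball a 9
      · have hy' : a - y ∈ ball (0 : Euc d) 9 := by
          rw [mem_ball_zero_iff, norm_sub_rev, ← dist_eq_norm]; exact hy
        rw [hb, indicator_of_mem hy, indicator_of_mem hy']; simp
      · have hy' : a - y ∉ ball (0 : Euc d) 9 := by
          rw [mem_ball_zero_iff, norm_sub_rev, ← dist_eq_norm]; exact hy
        rw [hb, indicator_of_notMem hy, indicator_of_notMem hy']; simp
    have hVa : volume (ball a 9) = V := by
      rw [hV, Measure.addHaar_ball_center]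
    have hhold : (∫⁻ y, ‖g y‖ₑ ^ ρ) ^ (p / ρ) ≤ V ^ (p / ρ - 1) * ∫⁻ y, b (a - y) * ‖f y‖ₑ ^ p := by
      rw [hgρ ρ hρ0, ← hbp]
      have := finHolder (volume.restrict (ball a 9)) (fun y => ‖f y‖ₑ) hf.enorm ρ p hρ0 hρp
      rwa [Measure.restrict_apply_univ, hVa] at this
    have hgfin : ∫⁻ y, ‖g y‖ₑ ^ ρ ≠ ∞ := by
      intro h
      rw [h, ENNReal.top_rpow_of_pos (by positivity), top_le_iff] at hhold
      refine ENNReal.mul_ne_top (ENNReal.rpow_ne_top_of_nonneg (by linarith) hVf) ?_ hhold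
      rw [← hbp]
      exact (((setLIntegral_le_lintegral _ _).trans hf1).trans_lt ENNReal.one_lt_top).ne
    have hHg := H g hgm hgi hgfin
    have hpt : ∀ x, u (x - a) * Φ x ≤ W * (∫⁻ t in Icc (1/2:ℝ) 4, ‖TK K g x t‖ₑ ^ ρ) ^ (q / ρ) + W * (u (x - a) * E x) := by
      intro x
      by_cases hx : x - a ∈ ball (0 : Euc d) 1
      · have hux : u (x - a) = 1 := by rw [hu, indicator_of_mem hx]; rfl
        rw [hux, one_mul, one_mul]
        rw [mem_ball_zero_iff] at hx
        have hmt : Measurable (fun t => ‖TK K g x t‖ₑ ^ ρ) :=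
          ((TK_meas K hK g hgm).comp (measurable_prodMk_left (x := x))).enorm.pow_const _
        have h1 : ∫⁻ t in Icc (1/2:ℝ) 4, ‖TK K f x t‖ₑ ^ ρ ≤
            2 ^ ρ * ((∫⁻ t in Icc (1/2:ℝ) 4, ‖TK K g x t‖ₑ ^ ρ) + I * (c * G x) ^ ρ) := by
          calc _ ≤ ∫⁻ t in Icc (1/2:ℝ) 4, 2 ^ ρ * (‖TK K g x t‖ₑ ^ ρ + (c * G x) ^ ρ) := by
                apply lintegral_mono
                intro t
                refine le_trans ?_ (add_rpow_le2 _ _ ρ hρ0.le)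
                exact ENNReal.rpow_le_rpow (local_pt K hK B hB c (by simp) hdec f hfi a x hx t) hρ0.le
            _ = _ := by
              rw [lintegral_const_mul _ (by fun_prop), lintegral_add_left hmt, lintegral_const,
                Measure.restrict_apply_univ, mul_comm I]
        calc Φ x ≤ (2 ^ ρ * ((∫⁻ t in Icc (1/2:ℝ) 4, ‖TK K g x t‖ₑ ^ ρ) + I * (c * G x) ^ ρ)) ^ (q / ρ) :=
              ENNReal.rpow_le_rpow h1 hqρ
          _ = (2 ^ ρ) ^ (q / ρ) * ((∫⁻ t in Icc (1/2:ℝ) 4, ‖TK K g x t‖ₑ ^ ρ) + I * (c * G x) ^ ρ) ^ (q / ρ) :=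
              ENNReal.mul_rpow_of_nonneg _ _ hqρ
          _ ≤ (2 ^ ρ) ^ (q / ρ) * (2 ^ (q / ρ) * ((∫⁻ t in Icc (1/2:ℝ) 4, ‖TK K g x t‖ₑ ^ ρ) ^ (q / ρ) + (I * (c * G x) ^ ρ) ^ (q / ρ))) := by
              gcongr
              exact add_rpow_le2 _ _ _ hqρ
          _ = _ := by
              rw [ENNReal.mul_rpow_of_nonneg I _ hqρ, ← ENNReal.rpow_mul (c * G x), mul_div_cancel₀ _ hρ0.ne', hW, hE]
              ring
      · have hux : u (x - a) = 0 := by rw [hu, indicator_of_notMem hx]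
        rw [hux]; simp
    refine (lintegral_mono hpt).trans ?_
    rw [lintegral_add_left ((hmeasΦ g hgm).const_mul _), lintegral_const_mul _ (hmeasΦ g hgm),
      lintegral_const_mul _ (by fun_prop)]
    gcongr
    refine hHg.trans ?_
    rw [mul_assoc]
    gcongr
    calc _ = ((∫⁻ y, ‖g y‖ₑ ^ ρ) ^ (p / ρ)) ^ (q / p) := by
          rw [← ENNReal.rpow_mul]; congr 1; field_simp
      _ ≤ _ := ENNReal.rpow_le_rpow hhold (by linarith)
      _ = _ := by
          rw [ENNReal.mul_rpow_of_nonneg _ _ (by linarith), ← ENNReal.rpow_mul]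
  have hswap : ∀ Ψ : Euc d → ℝ≥0∞, Measurable Ψ → ∫⁻ a, ∫⁻ x, u (x - a) * Ψ x = U * ∫⁻ x, Ψ x := by
    intro Ψ hΨ
    rw [lintegral_lintegral_swap (Measurable.aemeasurable (by simp only [Function.uncurry_def]; fun_prop))]
    have : ∀ x, ∫⁻ a, u (x - a) * Ψ x = U * Ψ x := by
      intro x
      rw [lintegral_mul_const _ (by fun_prop), lintegral_sub_left_eq_self u x, hui]
    simp_rw [this]
    rw [lintegral_const_mul _ hΨ]
  have hmain : U * ∫⁻ x, Φ x ≤ W * (D ^ q * V ^ ((p / ρ - 1) * (q / p)) * V) + W * (U * ∫⁻ x, E x) := by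
    rw [← hswap Φ hΦm, ← hswap E hEm]
    refine (lintegral_mono hloc).trans ?_
    have hmb : Measurable fun a => (∫⁻ y, b (a - y) * ‖f y‖ₑ ^ p) ^ (q / p) := by
      apply Measurable.pow_const
      apply Measurable.lintegral_prod_right' (f := fun z : Euc d × Euc d => b (z.1 - z.2) * ‖f z.2‖ₑ ^ p)
      fun_prop
    rw [lintegral_add_left (by fun_prop), lintegral_const_mul _ (by fun_prop), lintegral_const_mul _ hmb]
    gcongr
    · rw [← hbi]
      exact conv_le d b (fun y => ‖f y‖ₑ ^ p) hbm hb1 (by fun_prop) hf1 _ hqp1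
    · rw [lintegral_const_mul]
      apply Measurable.lintegral_prod_right' (f := fun z : Euc d × Euc d => u (z.2 - z.1) * E z.2)
      fun_prop
  calc ∫⁻ x, Φ x = U⁻¹ * (U * ∫⁻ x, Φ x) := by
        rw [← mul_assoc, ENNReal.inv_mul_cancel hU0 hUf, one_mul]
    _ ≤ U⁻¹ * (W * (D ^ q * V ^ ((p / ρ - 1) * (q / p)) * V) + W * (U * ∫⁻ x, E x)) := by gcongr
    _ = c1 * D ^ q + (U⁻¹ * U) * W * ∫⁻ x, E x := by rw [hc1]; ring
    _ ≤ c1 * D ^ q + c2 * c ^ q := by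
        rw [ENNReal.inv_mul_cancel hU0 hUf, one_mul, hc2, mul_assoc W]
        gcongr



lemma homog {d : ℕ} (K : Euc d × ℝ → ℂ) (D : ℝ≥0) (ρ q : ℝ) (hρ : 0 < ρ) (hq : 0 < q)
    (H : ∀ f : Euc d → ℂ, Measurable f → Integrable f → ∫⁻ y, ‖f y‖ₑ ^ ρ ≤ 1 →
      ∫⁻ x, (∫⁻ t in Icc (1/2:ℝ) 4, ‖TK K f x t‖ₑ ^ ρ) ^ (q / ρ) ≤ (D : ℝ≥0∞) ^ q)
    (g : Euc d → ℂ) (hg : Measurable g) (hgi : Integrable g) (hgf : ∫⁻ y, ‖g y‖ₑ ^ ρ ≠ ∞) :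
    ∫⁻ x, (∫⁻ t in Icc (1/2:ℝ) 4, ‖TK K g x t‖ₑ ^ ρ) ^ (q / ρ) ≤ D ^ q * (∫⁻ y, ‖g y‖ₑ ^ ρ) ^ (q / ρ) := by
  have hqρ : 0 < q / ρ := by positivity
  set N := ∫⁻ y, ‖g y‖ₑ ^ ρ with hN
  by_cases hN0 : N = 0
  · have h1 : ∀ᵐ y, g y = 0 := by
      rw [hN, lintegral_eq_zero_iff (by fun_prop)] at hN0
      filter_upwards [hN0] with y hy
      simpa [hρ, hρ.ne', hρ.le.not_gt] using hy
    have h2 : ∀ x t, TK K g x t = 0 := by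
      intro x t
      rw [TK]
      apply integral_eq_zero_of_ae
      filter_upwards [h1] with y hy
      simp [hy]
    simp [h2, hρ, hqρ]
  · set n : ℝ := N.toReal ^ (1 / ρ) with hn
    have hNr : 0 < N.toReal := ENNReal.toReal_pos hN0 hgf
    have hn0 : 0 < n := by positivity
    have hnρ : ENNReal.ofReal n ^ ρ = N := by
      rw [ENNReal.ofReal_rpow_of_pos hn0, hn, ← Real.rpow_mul hNr.le, one_div_mul_cancel hρ.ne', Real.rpow_one,
        ENNReal.ofReal_toReal hgf]
    set f : Euc d → ℂ := fun y => ((n⁻¹ : ℝ) : ℂ) * g y with hf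
    have hgeq : ∀ y, g y = (n : ℂ) * f y := by
      intro y
      simp only [hf]
      push_cast
      rw [mul_inv_cancel_left₀]
      exact_mod_cast hn0.ne'
    have hfm : Measurable f := hg.const_mul _
    have hen : ‖(n : ℂ)‖ₑ = ENNReal.ofReal n := by
      rw [← ofReal_norm_eq_enorm, Complex.norm_real, Real.norm_of_nonneg hn0.le]
    have hf1 : ∫⁻ y, ‖f y‖ₑ ^ ρ ≤ 1 := by
      have : N = N * ∫⁻ y, ‖f y‖ₑ ^ ρ := by
        conv_lhs => rw [hN]
        simp_rw [hgeq, enorm_mul, hen, ENNReal.mul_rpow_of_nonneg _ _ hρ.le, hnρ]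
        rw [lintegral_const_mul _ (by fun_prop)]
      have h3 : N * ∫⁻ y, ‖f y‖ₑ ^ ρ = N * 1 := by rw [← this, mul_one]
      exact ((ENNReal.mul_right_inj hN0 hgf).1 h3).le
    have hT : ∀ x t, ‖TK K g x t‖ₑ ^ ρ = N * ‖TK K f x t‖ₑ ^ ρ := by
      intro x t
      have : TK K g x t = (n : ℂ) * TK K f x t := by
        rw [TK, TK, ← integral_const_mul]
        congr 1; ext y
        rw [hgeq y]; ring
      rw [this, enorm_mul, hen, ENNReal.mul_rpow_of_nonneg _ _ hρ.le, hnρ]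
    simp_rw [hT]
    simp_rw [lintegral_const_mul' _ _ hgf, ENNReal.mul_rpow_of_nonneg _ _ hqρ.le]
    rw [lintegral_const_mul' _ _ (ENNReal.rpow_ne_top_of_nonneg hqρ.le hgf), mul_comm]
    gcongr
    exact H f hfm (hgi.const_mul _) hf1

lemma fin_main (d : ℕ) (hd : 2 ≤ d) (χ β₀ : ℝ → ℝ) (hχ : IsCutoff χ) (hβ : IsBump β₀) (C : ℝ≥0)
    (p0 q0 p q r lam : ℝ) (hp0 : 1 ≤ p0) (hq0 : p0 ≤ q0) (hlam : 0 < lam) (hlam1 : lam ≤ 1) (hqe : q * lam = q0)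
    (hpp : 0 < p) (hpq : p ≤ q) (hr : 0 < r) (hrp : r ≤ p) (hmin : 1 / p ≤ lam / p0 + (1 - lam))
    (hmax : lam / p0 ≤ 1 / r)
    (h0 : ∀ j (f : Euc d → ℂ), Measurable f → Integrable f → ∫⁻ y, ‖f y‖ₑ ^ p0 ≤ 1 →
      ∫⁻ x, (∫⁻ t in Icc (1/2:ℝ) 4, ‖TK (Kj d χ β₀ j) f x t‖ₑ ^ p0) ^ (q0 / p0) ≤
        ((C * 2 ^ (-((j : ℝ) * d) / q0) : ℝ≥0) : ℝ≥0∞) ^ q0) :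
    ∃ s, r ≤ s ∧ ∃ C3 : ℝ≥0, ∀ j (f : Euc d → ℂ), Measurable f → Integrable f → ∫⁻ y, ‖f y‖ₑ ^ p ≤ 1 →
      ∫⁻ x, (∫⁻ t in Icc (1/2:ℝ) 4, ‖TK (Kj d χ β₀ j) f x t‖ₑ ^ s) ^ (q / s) ≤
        C3 * (2 : ℝ≥0∞) ^ (-((j : ℝ) * d)) := by
  obtain ⟨M1, hM1⟩ := kernel_L1 d hd χ β₀ hχ hβ
  obtain ⟨A, hA0, hA⟩ := kernel_decay d hd χ β₀ hχ hβ
  have hp00 : 0 < p0 := by linarith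
  have hq00 : 0 < q0 := by linarith
  have hq : 0 < q := by linarith
  have hp1 : 1 ≤ p := by
    have h1 : lam / p0 ≤ lam := div_le_self hlam.le hp0
    have h2 : 1 / p ≤ 1 := by linarith
    rwa [div_le_one hpp] at h2
  set D : ℕ → ℝ≥0 := fun j => (C * 2 ^ (-((j : ℝ) * d) / q0)) ^ lam * M1 ^ (1 - lam) with hD
  have hDq : ∀ j, (D j : ℝ≥0∞) ^ q = (((C ^ lam * M1 ^ (1 - lam)) ^ q : ℝ≥0) : ℝ≥0∞) * (2 : ℝ≥0∞) ^ (-((j : ℝ) * d)) := by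
    intro j
    have h2 : (2 : ℝ≥0∞) ^ (-((j : ℝ) * d)) = (((2 : ℝ≥0) ^ (-((j : ℝ) * d)) : ℝ≥0) : ℝ≥0∞) := by
      rw [ENNReal.coe_rpow_of_ne_zero two_ne_zero]; simp
    rw [h2, ← ENNReal.coe_rpow_of_nonneg _ hq.le, ← ENNReal.coe_mul, ENNReal.coe_inj, hD]
    simp only [NNReal.mul_rpow, ← NNReal.rpow_mul]
    have : -((j : ℝ) * d) / q0 * lam * q = -((j : ℝ) * d) := by
      rw [mul_assoc, mul_comm lam, hqe]; field_simp
    rw [this]; ring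
  have happ : ∀ s u : ℝ, 0 ≤ u → u ≤ 1 → 0 < s → s * (lam / p0 + (1 - lam) * u) = 1 →
      ∀ j (f : Euc d → ℂ), Measurable f → Integrable f → ∫⁻ y, ‖f y‖ₑ ^ s ≤ 1 →
      ∫⁻ x, (∫⁻ t in Icc (1/2:ℝ) 4, ‖TK (Kj d χ β₀ j) f x t‖ₑ ^ s) ^ (q / s) ≤ (D j : ℝ≥0∞) ^ q := by
    intro s u hu0 hu1 hs hse j f hf hfi hf1
    obtain ⟨B, hB⟩ := Kj_bdd d hd χ β₀ hχ hβ j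
    have hKm := Kj_meas d hd χ β₀ hχ hβ j
    have := core2 (volume : Measure (Euc d)) (volume.restrict (Icc (1/2:ℝ) 4)) (volume : Measure (Euc d))
      (fun w => Kj d χ β₀ j (w.1.1 - w.2, w.1.2)) (by fun_prop) B (fun w => hB _)
      (C * 2 ^ (-((j : ℝ) * d) / q0)) M1
      (fun x y => (setLIntegral_le_lintegral _ _).trans ((hM1 j).2 (x - y)))
      (fun w => by
        have := lintegral_sub_left_eq_self (μ := (volume : Measure (Euc d))) (fun v => ‖Kj d χ β₀ j (v, w.2)‖ₑ) w.1
        simp only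
        rw [this]
        exact (hM1 j).1 w.2)
      p0 q0 s q lam u hp0 hq0 hlam hlam1 hu0 hu1 hs hse hqe (h0 j) f hf hfi hf1
    rw [hD, ENNReal.coe_mul, ENNReal.coe_rpow_of_nonneg _ hlam.le, ENNReal.coe_rpow_of_nonneg _ (by linarith)]
    exact this
  by_cases hc : lam / p0 ≤ 1 / p
  · refine ⟨p, hrp, (C ^ lam * M1 ^ (1 - lam)) ^ q, fun j f hf hfi hf1 => ?_⟩
    rw [← hDq]
    rcases hlam1.eq_or_lt with h | h
    · refine happ p 0 le_rfl zero_le_one hpp ?_ j f hf hfi hf1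
      have : 1 / p = lam / p0 := by
        apply le_antisymm _ hc
        rw [h] at hmin ⊢
        linarith
      rw [mul_zero, add_zero, ← this]
      field_simp
    · have h1 : 0 < 1 - lam := by linarith
      refine happ p ((1 / p - lam / p0) / (1 - lam)) (div_nonneg (by linarith) h1.le) ?_ hpp ?_ j f hf hfi hf1
      · rw [div_le_one h1]; linarith
      · rw [mul_div_cancel₀ _ h1.ne']
        field_simp
        ring
  · push Not at hc
    set ρ := p0 / lam with hρ
    have hρ1 : 1 ≤ ρ := by rw [hρ, le_div_iff₀ hlam]; linarith
    have hρ0 : 0 < ρ := by linarith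
    have hinv : lam / p0 = 1 / ρ := by rw [hρ, one_div_div]
    have hρp : ρ ≤ p := by
      rw [hinv] at hc
      exact ((one_div_lt_one_div hpp hρ0).1 hc).le
    have hrρ : r ≤ ρ := by
      rw [hinv] at hmax
      exact (one_div_le_one_div hρ0 hr).1 hmax
    obtain ⟨C1, C2, hloc⟩ := localize d hd ρ p q hρ1 hρp hpq
    refine ⟨ρ, hrρ, C1 * (C ^ lam * M1 ^ (1 - lam)) ^ q + C2 * (A.toNNReal * 2 ^ (2 * d)) ^ q, fun j f hf hfi hf1 => ?_⟩
    obtain ⟨B, hB⟩ := Kj_bdd d hd χ β₀ hχ hβ j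
    have hKm := Kj_meas d hd χ β₀ hχ hβ j
    refine (hloc (Kj d χ β₀ j) hKm B hB (A.toNNReal * ((2 ^ j) ^ d)⁻¹ * 2 ^ (2 * d)) (D j) ?_ ?_ f hf hfi hf1).trans ?_
    · intro v t hv
      have h1 := hA j v t hv
      calc _ = ENNReal.ofReal ‖Kj d χ β₀ j (v, t)‖ := (ofReal_norm_eq_enorm _).symm
        _ ≤ ENNReal.ofReal (A * ((2 ^ j) ^ d)⁻¹ * (‖v‖ ^ (2 * d))⁻¹) := ENNReal.ofReal_le_ofReal h1
        _ = ENNReal.ofReal (A * ((2 ^ j) ^ d)⁻¹) * ENNReal.ofReal ((‖v‖ ^ (2 * d))⁻¹) := ENNReal.ofReal_mul (by positivity)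
        _ ≤ ENNReal.ofReal (A * ((2 ^ j) ^ d)⁻¹) * (2 ^ (2 * d) * tailK d v) := by
          gcongr; exact tailK_ge d v hv
        _ = _ := by
          rw [← mul_assoc]
          congr 1
          rw [ENNReal.coe_mul]
          congr 1
          · rw [ENNReal.ofReal, ENNReal.coe_inj, Real.toNNReal_mul hA0]
            congr 1
            rw [← NNReal.coe_inj, Real.coe_toNNReal _ (by positivity)]
            push_cast; rfl
    · intro g hg hgi hgf
      exact homog (Kj d χ β₀ j) (D j) ρ q hρ0 hq
        (happ ρ 0 le_rfl zero_le_one hρ0 (by rw [hρ]; field_simp; ring) j) g hg hgi hgf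
    · have h3 : (((2 : ℝ≥0∞) ^ j) ^ d)⁻¹ = (2 : ℝ≥0∞) ^ (-((j : ℝ) * d)) := by
        rw [← pow_mul, ENNReal.rpow_neg]; norm_cast
      have h4 : ((A.toNNReal * ((2 ^ j) ^ d)⁻¹ * 2 ^ (2 * d) : ℝ≥0) : ℝ≥0∞) = (A.toNNReal * 2 ^ (2 * d) : ℝ≥0) * (2 : ℝ≥0∞) ^ (-((j : ℝ) * d)) := by
        rw [← h3]
        push_cast
        ring
      have h5 : (((2 : ℝ≥0∞) ^ (-((j : ℝ) * d))) ^ q) ≤ (2 : ℝ≥0∞) ^ (-((j : ℝ) * d)) := by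
        rw [← ENNReal.rpow_mul]
        apply ENNReal.rpow_le_rpow_of_exponent_le (by norm_num)
        have : 0 ≤ (j : ℝ) * d := by positivity
        nlinarith
      rw [hDq, h4, ENNReal.mul_rpow_of_nonneg _ _ hq.le, ENNReal.coe_add, add_mul, ENNReal.coe_mul C1, ENNReal.coe_mul C2,
        mul_assoc, mul_assoc, ENNReal.coe_rpow_of_nonneg (A.toNNReal * 2 ^ (2 * d)) hq.le]
      gcongr



lemma lqNorm_zero {α : Type*} [MeasurableSpace α] (q : ℝ≥0∞) (hq : 0 < q) (μ : Measure α) :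
    lqNorm q (fun _ : α => (0 : ℝ≥0∞)) μ = 0 := by
  rw [lqNorm]
  split_ifs with h
  · exact essSup_const_bot
  · have : 0 < q.toReal := ENNReal.toReal_pos hq.ne' h
    simp [this]

lemma opnorm_le (d : ℕ) (hd : 2 ≤ d) (χ β₀ : ℝ → ℝ) (hβ : IsBump β₀) (j : ℕ) (p q r : ℝ≥0∞)
    (hq : 0 < q) (hr : 0 < r) (b : ℝ≥0∞)
    (H : ∀ f : Euc d → ℂ, Measurable f → Integrable f → eLpNorm f p volume ≤ 1 →
      mixedNorm d q r (TK (Kj d χ β₀ j) f) ≤ b) : AjOpNorm d χ β₀ j p q r ≤ b := by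
  rw [AjOpNorm]
  refine iSup₂_le fun f hf => ?_
  by_cases hfi : Integrable f
  · set g := hfi.1.mk f with hg
    have hgm : Measurable g := hfi.1.stronglyMeasurable_mk.measurable
    have hfg : f =ᵐ[volume] g := hfi.1.ae_eq_mk
    have : Aj d χ β₀ j f = TK (Kj d χ β₀ j) g := by
      ext x t
      rw [Kj_eq d hd χ β₀ hβ j f hfi x t, TK]
      apply integral_congr_ae
      filter_upwards [hfg] with y hy
      rw [hy]
    rw [this]
    exact H g hgm (hfi.congr hfg) (by rwa [← eLpNorm_congr_ae hfg])
  · have : Aj d χ β₀ j f = fun _ _ => 0 := by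
      ext x t
      simp [Aj, sphAvg, freqLoc_zero d β₀ j f hfi]
    rw [this, mixedNorm]
    simp only [nnnorm_zero, ENNReal.coe_zero, lqNorm_zero r hr]
    rw [lqNorm_zero q hq]
    exact bot_le

lemma le_opnorm (d : ℕ) (hd : 2 ≤ d) (χ β₀ : ℝ → ℝ) (hβ : IsBump β₀) (j : ℕ) (p q r : ℝ≥0∞)
    (f : Euc d → ℂ) (hfi : Integrable f) (hf : eLpNorm f p volume ≤ 1) :
    mixedNorm d q r (TK (Kj d χ β₀ j) f) ≤ AjOpNorm d χ β₀ j p q r := by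
  have : TK (Kj d χ β₀ j) f = Aj d χ β₀ j f := by
    ext x t
    rw [Kj_eq d hd χ β₀ hβ j f hfi x t, TK]
  rw [this, AjOpNorm]
  exact le_iSup₂ (f := fun f (_ : eLpNorm f p volume ≤ 1) => mixedNorm d q r (Aj d χ β₀ j f)) f hf

lemma mixedNorm_fin (d : ℕ) (q r : ℝ≥0∞) (hq : q ≠ ∞) (hr : r ≠ ∞) (F : Euc d → ℝ → ℂ) :
    mixedNorm d q r F = (∫⁻ x, (∫⁻ t, ‖F x t‖ₑ ^ r.toReal) ^ (q.toReal / r.toReal)) ^ (1 / q.toReal) := by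
  simp only [mixedNorm, lqNorm, hq, hr, if_false, ← ENNReal.rpow_mul, one_div_mul_eq_div]
  rfl

lemma eLpNorm_le_one (d : ℕ) (p : ℝ≥0∞) (hp0 : p ≠ 0) (hp : p ≠ ∞) (f : Euc d → ℂ) :
    eLpNorm f p volume ≤ 1 ↔ ∫⁻ y, ‖f y‖ₑ ^ p.toReal ≤ 1 := by
  have hp' : 0 < p.toReal := ENNReal.toReal_pos hp0 hp
  rw [eLpNorm_eq_lintegral_rpow_enorm_toReal hp0 hp, one_div, ENNReal.rpow_inv_le_iff hp', ENNReal.one_rpow]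

lemma TK_supp (d : ℕ) (χ β₀ : ℝ → ℝ) (hχ : IsCutoff χ) (j : ℕ) (f : Euc d → ℂ) (x : Euc d) (t : ℝ)
    (ht : t ∉ Icc (1/2:ℝ) 4) : TK (Kj d χ β₀ j) f x t = 0 := by
  simp [TK, Kj_supp d χ β₀ hχ j _ t ht]

lemma TK_lint (d : ℕ) (χ β₀ : ℝ → ℝ) (hχ : IsCutoff χ) (j : ℕ) (f : Euc d → ℂ) (x : Euc d) (r : ℝ) (hr : 0 < r) :
    ∫⁻ t, ‖TK (Kj d χ β₀ j) f x t‖ₑ ^ r = ∫⁻ t in Icc (1/2:ℝ) 4, ‖TK (Kj d χ β₀ j) f x t‖ₑ ^ r := by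
  symm
  apply setLIntegral_eq_of_support_subset
  intro t ht
  by_contra h
  apply ht
  simp [TK_supp d χ β₀ hχ j f x t h, hr]

lemma time_holder (d : ℕ) (hd : 2 ≤ d) (χ β₀ : ℝ → ℝ) (hχ : IsCutoff χ) (hβ : IsBump β₀) (j : ℕ)
    (f : Euc d → ℂ) (hf : Measurable f) (x : Euc d) (r s : ℝ) (hr : 0 < r) (hrs : r ≤ s) :
    (∫⁻ t, ‖TK (Kj d χ β₀ j) f x t‖ₑ ^ r) ^ (s / r) ≤
      (volume (Icc (1/2:ℝ) 4)) ^ (s / r - 1) * ∫⁻ t in Icc (1/2:ℝ) 4, ‖TK (Kj d χ β₀ j) f x t‖ₑ ^ s := by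
  rw [TK_lint d χ β₀ hχ j f x r hr]
  have hm : Measurable (fun t => ‖TK (Kj d χ β₀ j) f x t‖ₑ) :=
    ((TK_meas _ (Kj_meas d hd χ β₀ hχ hβ j) f hf).comp (measurable_prodMk_left (x := x))).enorm
  have := finHolder (volume.restrict (Icc (1/2:ℝ) 4)) _ hm r s hr hrs
  rwa [Measure.restrict_apply_univ] at this

lemma fin_case (d : ℕ) (hd : 2 ≤ d) (χ β₀ : ℝ → ℝ)
    (hχ : IsCutoff χ) (hβ : IsBump β₀)
    (p₀ q₀ : ℝ≥0∞) (hp₀ : 1 ≤ p₀) (hp₀q₀ : p₀ ≤ q₀)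
    (C : ℝ≥0)
    (hC : ∀ j : ℕ, (2 : ℝ≥0∞) ^ (((j : ℝ) * d) / q₀.toReal) *
      AjOpNorm d χ β₀ j p₀ q₀ p₀ ≤ C)
    (q p r ρmin ρmax : ℝ≥0∞) (hq : q₀ ≤ q)
    (hρmin : ρmin⁻¹ = 1 - (q₀ / q) * (1 - p₀⁻¹))
    (hρmax : ρmax⁻¹ = (q₀ / q) * p₀⁻¹)
    (hp1 : ρmin ≤ p) (hp2 : p ≤ q) (hr0 : 0 < r) (hr1 : r ≤ p) (hr2 : r ≤ ρmax) (hqt : q ≠ ∞) :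
    ∃ C' : ℝ≥0, ∀ j : ℕ,
      (2 : ℝ≥0∞) ^ (((j : ℝ) * d) / q.toReal) * AjOpNorm d χ β₀ j p q r ≤ C' := by
  have hq0t : q₀ ≠ ∞ := (hq.trans_lt hqt.lt_top).ne
  have hp0t : p₀ ≠ ∞ := (hp₀q₀.trans_lt hq0t.lt_top).ne
  have hpt : p ≠ ∞ := (hp2.trans_lt hqt.lt_top).ne
  have hrt : r ≠ ∞ := (hr1.trans_lt hpt.lt_top).ne
  have hp00 : p₀ ≠ 0 := (zero_lt_one.trans_le hp₀).ne'
  have hq00 : q₀ ≠ 0 := (zero_lt_one.trans_le (hp₀.trans hp₀q₀)).ne'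
  have hqz : q ≠ 0 := (zero_lt_one.trans_le ((hp₀.trans hp₀q₀).trans hq)).ne'
  have hpz : p ≠ 0 := (hr0.trans_le hr1).ne'
  lift p₀ to ℝ≥0 using hp0t
  lift q₀ to ℝ≥0 using hq0t
  lift q to ℝ≥0 using hqt
  lift p to ℝ≥0 using hpt
  lift r to ℝ≥0 using hrt
  have hp₀' : (1:ℝ) ≤ p₀ := by exact_mod_cast hp₀
  have hp₀q₀' : (p₀:ℝ) ≤ q₀ := by exact_mod_cast hp₀q₀
  have hq' : (q₀:ℝ) ≤ q := by exact_mod_cast hq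
  have hpq' : (p:ℝ) ≤ q := by exact_mod_cast hp2
  have hr0' : (0:ℝ) < r := by exact_mod_cast hr0
  have hr1' : (r:ℝ) ≤ p := by exact_mod_cast hr1
  have hp' : (0:ℝ) < p := by linarith
  have hqpos : (0:ℝ) < q := by linarith
  have hq0pos : (0:ℝ) < q₀ := by linarith
  have hp0pos : (0:ℝ) < p₀ := by linarith
  set lam : ℝ := q₀ / q with hlam
  have hlam0 : 0 < lam := by positivity
  have hlam1 : lam ≤ 1 := by rw [hlam, div_le_one hqpos]; exact hq'
  have hlt : ((q₀ : ℝ≥0∞) / q) = ENNReal.ofReal lam := by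
    rw [hlam, ENNReal.ofReal_div_of_pos hqpos]; simp
  have hpinv : ∀ a : ℝ≥0, (0:ℝ) < a → ((a : ℝ≥0∞))⁻¹ = ENNReal.ofReal (1 / a) := by
    intro a ha
    rw [one_div, ENNReal.ofReal_inv_of_pos ha]; simp
  have hmin : 1 / (p:ℝ) ≤ lam / p₀ + (1 - lam) := by
    have h1 := ENNReal.inv_le_inv.2 hp1
    have h2 : 1 / (p₀:ℝ) ≤ 1 := by rw [div_le_one hp0pos]; exact hp₀'
    have h3 : 0 ≤ 1 / (p₀:ℝ) := by positivity
    rw [hρmin, hpinv p hp', hpinv p₀ hp0pos, hlt, ← ENNReal.ofReal_one, ← ENNReal.ofReal_sub _ h3,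
      ← ENNReal.ofReal_mul hlam0.le, ← ENNReal.ofReal_sub _ (mul_nonneg hlam0.le (by linarith)),
      ENNReal.ofReal_le_ofReal_iff] at h1
    · calc _ ≤ _ := h1
        _ = _ := by ring
    · have : lam * (1 - 1 / (p₀:ℝ)) ≤ 1 * 1 := by
        apply mul_le_mul hlam1 (by linarith) (by linarith) zero_le_one
      linarith
  have hmax : lam / p₀ ≤ 1 / (r:ℝ) := by
    have h1 := ENNReal.inv_le_inv.2 hr2
    rw [hρmax, hpinv r hr0', hpinv p₀ hp0pos, hlt, ← ENNReal.ofReal_mul hlam0.le,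
      ENNReal.ofReal_le_ofReal_iff (by positivity)] at h1
    rw [div_eq_mul_one_div]; exact h1
  have hqe : (q:ℝ) * lam = q₀ := by rw [hlam]; field_simp
  have h0 : ∀ j (f : Euc d → ℂ), Measurable f → Integrable f → ∫⁻ y, ‖f y‖ₑ ^ (p₀:ℝ) ≤ 1 →
      ∫⁻ x, (∫⁻ t in Icc (1/2:ℝ) 4, ‖TK (Kj d χ β₀ j) f x t‖ₑ ^ (p₀:ℝ)) ^ ((q₀:ℝ) / p₀) ≤
        ((C * 2 ^ (-((j : ℝ) * d) / (q₀:ℝ)) : ℝ≥0) : ℝ≥0∞) ^ (q₀:ℝ) := by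
    intro j f hf hfi hf1
    have h1 := le_opnorm d hd χ β₀ hβ j p₀ q₀ p₀ f hfi ((eLpNorm_le_one d p₀ hp00 (by simp) f).2 (by simpa using hf1))
    have h2 : AjOpNorm d χ β₀ j p₀ q₀ p₀ ≤ ((C * 2 ^ (-((j : ℝ) * d) / (q₀:ℝ)) : ℝ≥0) : ℝ≥0∞) := by
      have h3 := hC j
      rw [ENNReal.coe_toReal] at h3
      rw [ENNReal.coe_mul, ENNReal.coe_rpow_of_ne_zero two_ne_zero, neg_div, ENNReal.rpow_neg,
        ← div_eq_mul_inv, ENNReal.le_div_iff_mul_le, mul_comm]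
      · exact_mod_cast h3
      · left
        simp
      · left
        exact ENNReal.rpow_ne_top_of_nonneg (by positivity) (by simp)
    have h4 := h1.trans h2
    rw [mixedNorm_fin d _ _ (by simp) (by simp), ENNReal.coe_toReal, ENNReal.coe_toReal] at h4
    rw [one_div, ENNReal.rpow_inv_le_iff hq0pos] at h4
    refine le_trans ?_ h4
    simp_rw [TK_lint d χ β₀ hχ j f _ _ hp0pos]
    exact le_rfl
  obtain ⟨s, hrs, C3, hC3⟩ := fin_main d hd χ β₀ hχ hβ C p₀ q₀ p q r lam hp₀' hp₀q₀' hlam0 hlam1 hqe hp' hpq' hr0' hr1'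
    hmin hmax h0
  have hs0 : 0 < s := by linarith
  have hsr : 1 ≤ s / r := by rwa [one_le_div hr0']
  set I := volume (Icc (1/2:ℝ) 4) with hI
  have hIf : I ≠ ∞ := measure_Icc_lt_top.ne
  set c : ℝ≥0∞ := ((I ^ (s / r - 1)) ^ ((q:ℝ) / s) * C3) ^ (1 / (q:ℝ)) with hc
  have hcf : c ≠ ∞ := by
    apply ENNReal.rpow_ne_top_of_nonneg (by positivity)
    apply ENNReal.mul_ne_top _ (by simp)
    apply ENNReal.rpow_ne_top_of_nonneg (by positivity)
    exact ENNReal.rpow_ne_top_of_nonneg (by linarith) hIf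
  refine ⟨c.toNNReal, fun j => ?_⟩
  rw [ENNReal.coe_toNNReal hcf, ENNReal.coe_toReal]
  have hop : AjOpNorm d χ β₀ j p q r ≤ c * (2 : ℝ≥0∞) ^ (-((j : ℝ) * d / (q:ℝ))) := by
    apply opnorm_le d hd χ β₀ hβ j p q r (pos_iff_ne_zero.2 hqz) hr0
    intro f hf hfi hf1
    rw [eLpNorm_le_one d p hpz (by simp), ENNReal.coe_toReal] at hf1
    rw [mixedNorm_fin d _ _ (by simp) (by simp), ENNReal.coe_toReal, ENNReal.coe_toReal]
    have h5 : ∀ x, (∫⁻ t, ‖TK (Kj d χ β₀ j) f x t‖ₑ ^ (r:ℝ)) ^ ((q:ℝ) / r) ≤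
        (I ^ (s / r - 1)) ^ ((q:ℝ) / s) * (∫⁻ t in Icc (1/2:ℝ) 4, ‖TK (Kj d χ β₀ j) f x t‖ₑ ^ s) ^ ((q:ℝ) / s) := by
      intro x
      rw [← ENNReal.mul_rpow_of_nonneg _ _ (by positivity)]
      calc _ = ((∫⁻ t, ‖TK (Kj d χ β₀ j) f x t‖ₑ ^ (r:ℝ)) ^ (s / r)) ^ ((q:ℝ) / s) := by
            rw [← ENNReal.rpow_mul]; congr 1; field_simp
        _ ≤ _ := ENNReal.rpow_le_rpow (time_holder d hd χ β₀ hχ hβ j f hf x r s hr0' hrs) (by positivity)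
    have h6 : ∫⁻ x, (∫⁻ t, ‖TK (Kj d χ β₀ j) f x t‖ₑ ^ (r:ℝ)) ^ ((q:ℝ) / r) ≤
        ((I ^ (s / r - 1)) ^ ((q:ℝ) / s) * C3) * (2 : ℝ≥0∞) ^ (-((j : ℝ) * d)) := by
      refine (lintegral_mono h5).trans ?_
      rw [lintegral_const_mul', mul_assoc]
      · gcongr
        exact hC3 j f hf hfi hf1
      · apply ENNReal.rpow_ne_top_of_nonneg (by positivity)
        exact ENNReal.rpow_ne_top_of_nonneg (by linarith) hIf
    refine (ENNReal.rpow_le_rpow h6 (by positivity)).trans (le_of_eq ?_)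
    rw [ENNReal.mul_rpow_of_nonneg _ _ (by positivity), ← ENNReal.rpow_mul 2, hc]
    congr 2
    ring
  calc _ ≤ (2 : ℝ≥0∞) ^ ((j : ℝ) * d / (q:ℝ)) * (c * (2 : ℝ≥0∞) ^ (-((j : ℝ) * d / (q:ℝ)))) := by gcongr
    _ = c * ((2 : ℝ≥0∞) ^ ((j : ℝ) * d / (q:ℝ)) * (2 : ℝ≥0∞) ^ (-((j : ℝ) * d / (q:ℝ)))) := by ring
    _ = c := by
      rw [← ENNReal.rpow_add _ _ (by simp) (by simp)]
      simp

lemma top_case (d : ℕ) (hd : 2 ≤ d) (χ β₀ : ℝ → ℝ)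
    (hχ : IsCutoff χ) (hβ : IsBump β₀) (p r : ℝ≥0∞) (hp1 : 1 ≤ p) (hr0 : 0 < r) (hr1 : r ≤ p) :
    ∃ C' : ℝ≥0, ∀ j : ℕ, AjOpNorm d χ β₀ j p ∞ r ≤ C' := by
  obtain ⟨M, hM⟩ := kernel_L1 d hd χ β₀ hχ hβ
  set I := volume (Icc (1/2:ℝ) 4) with hI
  have hIf : I ≠ ∞ := measure_Icc_lt_top.ne
  have hKL : ∀ j x t, ∫⁻ y, ‖Kj d χ β₀ j (x - y, t)‖ₑ ≤ M := by
    intro j x t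
    rw [lintegral_sub_left_eq_self (μ := (volume : Measure (Euc d))) (fun v => ‖Kj d χ β₀ j (v, t)‖ₑ) x]
    exact (hM j).1 t
  suffices h : ∃ C' : ℝ≥0, ∀ j (f : Euc d → ℂ), Measurable f → Integrable f → eLpNorm f p volume ≤ 1 →
      ∀ x, lqNorm r (fun t => (‖TK (Kj d χ β₀ j) f x t‖₊ : ℝ≥0∞)) volume ≤ C' by
    obtain ⟨C', hC'⟩ := h
    refine ⟨C', fun j => opnorm_le d hd χ β₀ hβ j p ∞ r (by simp) hr0 _ fun f hf hfi hf1 => ?_⟩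
    rw [mixedNorm, lqNorm, if_pos rfl]
    exact essSup_le_of_ae_le _ (Filter.Eventually.of_forall fun x => hC' j f hf hfi hf1 x)
  by_cases hpt : p = ∞
  · subst hpt
    have hb : ∀ j (f : Euc d → ℂ), eLpNorm f ∞ volume ≤ 1 → ∀ x t, ‖TK (Kj d χ β₀ j) f x t‖ₑ ≤ M := by
      intro j f hf1 x t
      refine (TK_enorm _ _ _ _).trans (le_trans (lintegral_mono_ae ?_) (hKL j x t))
      rw [eLpNorm_exponent_top] at hf1
      filter_upwards [ae_le_eLpNormEssSup (f := f) (μ := volume)] with y hy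
      calc _ ≤ ‖Kj d χ β₀ j (x - y, t)‖ₑ * 1 := by gcongr; exact hy.trans hf1
        _ = _ := mul_one _
    by_cases hrt : r = ∞
    · refine ⟨M, fun j f hf hfi hf1 x => ?_⟩
      rw [lqNorm, if_pos hrt]
      exact essSup_le_of_ae_le _ (Filter.Eventually.of_forall fun t => hb j f hf1 x t)
    · have hr' : 0 < r.toReal := ENNReal.toReal_pos hr0.ne' hrt
      have hcf : (I * M ^ r.toReal) ^ (1 / r.toReal) ≠ ∞ := by
        apply ENNReal.rpow_ne_top_of_nonneg (by positivity)
        exact ENNReal.mul_ne_top hIf (ENNReal.rpow_ne_top_of_nonneg hr'.le (by simp))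
      refine ⟨((I * M ^ r.toReal) ^ (1 / r.toReal)).toNNReal, fun j f hf hfi hf1 x => ?_⟩
      rw [ENNReal.coe_toNNReal hcf, lqNorm, if_neg hrt]
      apply ENNReal.rpow_le_rpow _ (by positivity)
      have := TK_lint d χ β₀ hχ j f x r.toReal hr'
      refine (le_of_eq this).trans ?_
      calc _ ≤ ∫⁻ t in Icc (1/2:ℝ) 4, (M : ℝ≥0∞) ^ r.toReal :=
            lintegral_mono fun t => ENNReal.rpow_le_rpow (hb j f hf1 x t) hr'.le
        _ = _ := by rw [lintegral_const, Measure.restrict_apply_univ, mul_comm]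
  · have hrt : r ≠ ∞ := (hr1.trans_lt (lt_top_iff_ne_top.2 hpt)).ne
    have hr' : 0 < r.toReal := ENNReal.toReal_pos hr0.ne' hrt
    have hrp : r.toReal ≤ p.toReal := ENNReal.toReal_mono hpt hr1
    have hp' : 1 ≤ p.toReal := by
      have := ENNReal.toReal_mono hpt hp1
      simpa using this
    set a := p.toReal with ha
    have ha0 : 0 < a := by linarith
    set c : ℝ≥0∞ := (I ^ (a / r.toReal - 1) * (M ^ (a - 1) * M)) ^ (1 / a) with hc
    have har : 1 ≤ a / r.toReal := by rwa [one_le_div hr']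
    have hcf : c ≠ ∞ := by
      apply ENNReal.rpow_ne_top_of_nonneg (by positivity)
      refine ENNReal.mul_ne_top (ENNReal.rpow_ne_top_of_nonneg (by linarith) hIf) (ENNReal.mul_ne_top ?_ (by simp))
      exact ENNReal.rpow_ne_top_of_nonneg (by linarith) (by simp)
    refine ⟨c.toNNReal, fun j f hf hfi hf1 x => ?_⟩
    rw [eLpNorm_le_one d p (zero_lt_one.trans_le hp1).ne' hpt, ← ha] at hf1
    rw [ENNReal.coe_toNNReal hcf, lqNorm, if_neg hrt]
    have hKm := Kj_meas d hd χ β₀ hχ hβ j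
    have h1 : ∀ t, ‖TK (Kj d χ β₀ j) f x t‖ₑ ^ a ≤ (M : ℝ≥0∞) ^ (a - 1) * ∫⁻ y, ‖Kj d χ β₀ j (x - y, t)‖ₑ * ‖f y‖ₑ ^ a := by
      intro t
      refine (ENNReal.rpow_le_rpow (TK_enorm _ _ _ _) ha0.le).trans ?_
      refine (wHolder volume (fun y => ‖Kj d χ β₀ j (x - y, t)‖ₑ) (fun y => ‖f y‖ₑ) (by fun_prop) (by fun_prop) a hp').trans ?_
      gcongr
      exact hKL j x t
    have h2 : ∫⁻ t in Icc (1/2:ℝ) 4, ‖TK (Kj d χ β₀ j) f x t‖ₑ ^ a ≤ M ^ (a - 1) * M := by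
      calc _ ≤ ∫⁻ t, ‖TK (Kj d χ β₀ j) f x t‖ₑ ^ a := setLIntegral_le_lintegral _ _
        _ ≤ ∫⁻ t, (M : ℝ≥0∞) ^ (a - 1) * ∫⁻ y, ‖Kj d χ β₀ j (x - y, t)‖ₑ * ‖f y‖ₑ ^ a := lintegral_mono h1
        _ = (M : ℝ≥0∞) ^ (a - 1) * ∫⁻ t, ∫⁻ y, ‖Kj d χ β₀ j (x - y, t)‖ₑ * ‖f y‖ₑ ^ a :=
            lintegral_const_mul' _ _ (ENNReal.rpow_ne_top_of_nonneg (by linarith) (by simp))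
        _ = (M : ℝ≥0∞) ^ (a - 1) * ∫⁻ y, ∫⁻ t, ‖Kj d χ β₀ j (x - y, t)‖ₑ * ‖f y‖ₑ ^ a := by
            rw [lintegral_lintegral_swap]
            exact Measurable.aemeasurable (by simp only [Function.uncurry_def]; fun_prop)
        _ ≤ (M : ℝ≥0∞) ^ (a - 1) * ∫⁻ y, M * ‖f y‖ₑ ^ a := by
            gcongr with y
            rw [lintegral_mul_const _ (by fun_prop)]
            gcongr
            exact (hM j).2 _
        _ ≤ _ := by
            rw [lintegral_const_mul _ (by fun_prop)]
            gcongr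
            exact (mul_le_mul_right hf1 _).trans (le_of_eq (mul_one _))
    have h3 := time_holder d hd χ β₀ hχ hβ j f hf x r.toReal a hr' hrp
    calc _ = ((∫⁻ t, ‖TK (Kj d χ β₀ j) f x t‖ₑ ^ r.toReal) ^ (a / r.toReal)) ^ (1 / a) := by
          rw [← ENNReal.rpow_mul]
          congr 1
          field_simp
      _ ≤ _ := ENNReal.rpow_le_rpow (h3.trans (by gcongr)) (by positivity)

theorem interpolation_lemma (d : ℕ) (hd : 2 ≤ d) (χ β₀ : ℝ → ℝ)
    (hχ : IsCutoff χ) (hβ : IsBump β₀)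
    (p₀ q₀ : ℝ≥0∞) (hp₀ : 1 ≤ p₀) (hp₀q₀ : p₀ ≤ q₀)
    (C : ℝ≥0)
    (hC : ∀ j : ℕ, (2 : ℝ≥0∞) ^ (((j : ℝ) * d) / q₀.toReal) *
      AjOpNorm d χ β₀ j p₀ q₀ p₀ ≤ C)
    (q p r ρmin ρmax : ℝ≥0∞) (hq : q₀ ≤ q)
    (hρmin : ρmin⁻¹ = 1 - (q₀ / q) * (1 - p₀⁻¹))
    (hρmax : ρmax⁻¹ = (q₀ / q) * p₀⁻¹)
    (hp1 : ρmin ≤ p) (hp2 : p ≤ q) (hr0 : 0 < r) (hr1 : r ≤ p) (hr2 : r ≤ ρmax) :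
    ∃ C' : ℝ≥0, ∀ j : ℕ,
      (2 : ℝ≥0∞) ^ (((j : ℝ) * d) / q.toReal) * AjOpNorm d χ β₀ j p q r ≤ C' := by
  by_cases hqt : q = ∞
  · subst hqt
    have h1 : ρmin = 1 := by
      rw [ENNReal.div_top, zero_mul, tsub_zero] at hρmin
      simpa using hρmin
    obtain ⟨C', hC'⟩ := top_case d hd χ β₀ hχ hβ p r (h1 ▸ hp1) hr0 hr1
    refine ⟨C', fun j => ?_⟩
    simpa using hC' j
  · exact fin_case d hd χ β₀ hχ hβ p₀ q₀ hp₀ hp₀q₀ C hC q p r ρmin ρmax hq hρmin hρmax hp1 hp2 hr0 hr1 hr2 hqt
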